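/- Let e > n be an integer, let K be a field containing an element ξ ∈ K^× of quantum characteristic e (that is, [e]_ξ = 0 and [k]_ξ ≠ 0 for 1 ≤ k < e), let κ ∈ Z^ℓ be a multicharge with κ_l − κ_{l+1} ≥ n for 1 ≤ l < ℓ, and set Λ = Σ_{l=1}^ℓ Λ_{κ_l mod e}. Then in the cyclotomic quiver Hecke algebra R_n^Λ(K) one has y_r^ℓ = 0 for every 1 ≤ r ≤ n, where ℓ is the level (the number of entries of κ). (The paper proves this for e = 0 or e > n; the e = 0 case reduces to the case e > n.) -/

import Mathlib

open scoped BigOperators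
open scoped Classical

namespace Paper

/-! ## Quantum integers -/

/-- The quantum integer `[d]_x` in a field, for `d ∈ ℤ`. -/
noncomputable def qint {K : Type*} [Field K] (x : K) (d : ℤ) : K :=
  if 0 ≤ d then ∑ k ∈ Finset.range d.toNat, x ^ k
  else -∑ k ∈ Finset.range (-d).toNat, x ^ (-((k : ℤ) + 1))

/-- The quantum integer `[d]_t` in a commutative ring, for an invertible `t` and `d ∈ ℤ`. -/
def qintU {O : Type*} [CommRing O] (t : Oˣ) (d : ℤ) : O :=
  if 0 ≤ d then ∑ k ∈ Finset.range d.toNat, (t : O) ^ k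
  else -∑ k ∈ Finset.range (-d).toNat, ((t ^ (-((k : ℤ) + 1)) : Oˣ) : O)

/-! ## Nodes, multipartitions and standard tableaux -/

/-- A node `(l, r, c)`: component `l`, row `r`, column `c` (all `0`-based). -/
abbrev Node : Type := ℕ × ℕ × ℕ

/-- `nodeBelow A B` holds when `B` is strictly below `A`, i.e. `A < B` lexicographically. -/
def nodeBelow (A B : Node) : Prop :=
  A.1 < B.1 ∨ (A.1 = B.1 ∧ (A.2.1 < B.2.1 ∨ (A.2.1 = B.2.1 ∧ A.2.2 < B.2.2)))

/-- An `ℓ`-multipartition of `n`. -/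
structure Multipartition (ℓ n : ℕ) : Type where
  part : ℕ → ℕ → ℕ
  comp_bound : ∀ l, ℓ ≤ l → ∀ r, part l r = 0
  antitone : ∀ l, Antitone (part l)
  row_bound : ∀ l r, n ≤ r → part l r = 0
  size : (∑ l ∈ Finset.range ℓ, ∑ r ∈ Finset.range n, part l r) = n

/-- The diagram of a multipartition. -/
def Multipartition.diagram {ℓ n : ℕ} (μ : Multipartition ℓ n) : Set Node :=
  {A | A.2.2 < μ.part A.1 A.2.1}

/-- A standard tableau: a bijection from the diagram of its shape onto `{1, …, n}`
that increases along rows and down columns of each component (it takes the value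
`0` off the diagram, so that it is determined by its entries). -/
structure StdTableau (ℓ n : ℕ) : Type where
  shape : Multipartition ℓ n
  entry : Node → ℕ
  entry_zero : ∀ A, A ∉ shape.diagram → entry A = 0
  bijOn : Set.BijOn entry shape.diagram (Set.Icc 1 n)
  row_inc : ∀ l r c, (l, r, c + 1) ∈ shape.diagram → entry (l, r, c) < entry (l, r, c + 1)
  col_inc : ∀ l r c, (l, r + 1, c) ∈ shape.diagram → entry (l, r, c) < entry (l, r + 1, c)

/-- The node of a standard tableau containing the entry `k`. -/
noncomputable def StdTableau.node {ℓ n : ℕ} (T : StdTableau ℓ n) (k : ℕ) : Node :=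
  Function.invFunOn T.entry T.shape.diagram k

/-- The content `c_k(T) = κ_l + c - r` of the entry `k` in the tableau `T`
(`1 ≤ k ≤ n`). -/
noncomputable def content {ℓ n : ℕ} (κ : ℕ → ℤ) (T : StdTableau ℓ n) (k : ℕ) : ℤ :=
  κ (T.node k).1 + ((T.node k).2.2 : ℤ) - ((T.node k).2.1 : ℤ)

/-- The residue sequence of a standard tableau, in `I^n` with `I = ℤ/eℤ`. -/
noncomputable def resSeq {ℓ n : ℕ} (e : ℕ) (κ : ℕ → ℤ) (T : StdTableau ℓ n) :
    Fin n → ZMod e :=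
  fun k => ((content κ T (k.1 + 1) : ℤ) : ZMod e)

/-- The residue of a node. -/
def resNode (e : ℕ) (κ : ℕ → ℤ) (A : Node) : ZMod e :=
  ((κ A.1 + (A.2.2 : ℤ) - (A.2.1 : ℤ) : ℤ) : ZMod e)

/-- A set of nodes is the diagram of a multipartition (with at most `ℓ` components)
iff it is finite and downward closed in rows and columns. -/
def IsDiagramSet (ℓ : ℕ) (S : Set Node) : Prop :=
  S.Finite ∧ (∀ A ∈ S, A.1 < ℓ) ∧
    (∀ l r c, (l, r, c + 1) ∈ S → (l, r, c) ∈ S) ∧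
    (∀ l r c, (l, r + 1, c) ∈ S → (l, r, c) ∈ S)

/-- `A` is an addable node of the diagram `S`. -/
def Addable (ℓ : ℕ) (S : Set Node) (A : Node) : Prop :=
  A ∉ S ∧ IsDiagramSet ℓ (S ∪ {A})

/-- `A` is a removable node of the diagram `S`. -/
def Removable (ℓ : ℕ) (S : Set Node) (A : Node) : Prop :=
  A ∈ S ∧ IsDiagramSet ℓ (S \ {A})

/-- `d_A(S)`: the number of addable nodes of `S` of the same residue as `A` strictly
below `A`, minus the number of removable ones. -/
noncomputable def dNode (ℓ e : ℕ) (κ : ℕ → ℤ) (S : Set Node) (A : Node) : ℤ :=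
  (Set.ncard {B | Addable ℓ S B ∧ resNode e κ B = resNode e κ A ∧ nodeBelow A B} : ℤ) -
    (Set.ncard {B | Removable ℓ S B ∧ resNode e κ B = resNode e κ A ∧ nodeBelow A B} : ℤ)

/-- The Brundan–Kleshchev–Wang degree `deg_e(T)` of a standard tableau, written as the
telescoping sum of the recursion `deg_e(T) = deg_e(T↓(n-1)) + d_A(Shape(T))`. -/
noncomputable def degE {ℓ n : ℕ} (e : ℕ) (κ : ℕ → ℤ) (T : StdTableau ℓ n) : ℤ :=
  ∑ m ∈ Finset.Icc 1 n,
    dNode ℓ e κ {A | A ∈ T.shape.diagram ∧ T.entry A ≤ m} (T.node m)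

/-- The restriction of the diagram of `T` to entries `≤ m` (the diagram of `Shape(T↓m)`). -/
def restDiag {ℓ n : ℕ} (T : StdTableau ℓ n) (m : ℕ) : Set Node :=
  {A | A ∈ T.shape.diagram ∧ T.entry A ≤ m}

/-- Dominance order on standard tableaux: `domTab S T` iff `S ⊵ T`. -/
def domTab {ℓ n : ℕ} (S T : StdTableau ℓ n) : Prop :=
  ∀ m l i : ℕ,
    Set.ncard {A | A ∈ restDiag T m ∧ (A.1 < l ∨ (A.1 = l ∧ A.2.1 ≤ i))} ≤
      Set.ncard {A | A ∈ restDiag S m ∧ (A.1 < l ∨ (A.1 = l ∧ A.2.1 ≤ i))}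

/-- Interchange the entries `r` and `r + 1` in an entry function. -/
def swapEntry (f : Node → ℕ) (r : ℕ) : Node → ℕ :=
  fun A => if f A = r then r + 1 else if f A = r + 1 then r else f A

/-- `ρ_r(T) = c_r(T) - c_{r+1}(T)`, the axial distance. -/
noncomputable def rhoTab {ℓ n : ℕ} (κ : ℕ → ℤ) (T : StdTableau ℓ n) (r : ℕ) : ℤ :=
  content κ T r - content κ T (r + 1)

/-- The entry function of the row-reading initial tableau `t^λ`. -/
noncomputable def tlamEntry {ℓ n : ℕ} (μ : Multipartition ℓ n) (A : Node) : ℕ :=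
  if A ∈ μ.diagram then
    (∑ l ∈ Finset.range A.1, ∑ r ∈ Finset.range n, μ.part l r) +
      (∑ r ∈ Finset.range A.2.1, μ.part A.1 r) + A.2.2 + 1
  else 0

/-- The finite set of possible contents of standard tableaux of size `n`. -/
noncomputable def contFinset (ℓ n : ℕ) (κ : ℕ → ℤ) : Finset ℤ :=
  ((Finset.range ℓ ×ˢ Finset.range n ×ˢ Finset.range n).image
      (fun x => κ x.1 + (x.2.2 : ℤ) - (x.2.1 : ℤ))).filter
    (fun c => ∃ T : StdTableau ℓ n, ∃ k, 1 ≤ k ∧ k ≤ n ∧ content κ T k = c)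

/-- The standard tableau (if any) obtained from `T` by interchanging the entries
`r` and `r + 1`; i.e. `T·s_r` if it is standard, and `none` otherwise. -/
noncomputable def oSwapO {ℓ n : ℕ} (T : StdTableau ℓ n) (r : ℕ) :
    Option (StdTableau ℓ n) :=
  if h : ∃ V : StdTableau ℓ n, V.entry = swapEntry T.entry r then some (Classical.choose h)
  else none

/-- `oSwap` extended to `Option`. -/
noncomputable def oSwap {ℓ n : ℕ} (X : Option (StdTableau ℓ n)) (r : ℕ) :
    Option (StdTableau ℓ n) :=
  X.bind fun T => oSwapO T r

/-- Evaluate a seminormal coefficient system on an optional tableau (by `0` if none). -/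
noncomputable def aE {ℓ n : ℕ} {K : Type*} [Field K] (α : ℕ → StdTableau ℓ n → K) (r : ℕ)
    (X : Option (StdTableau ℓ n)) : K :=
  X.elim 0 (α r)

/-! ## Separation and idempotent subrings -/

/-- `(K, t)` separates `Std(P_n)` (field version):
`[n]!_t ∏_{1 ≤ l < m ≤ ℓ} ∏_{-n < d < n} [κ_l - κ_m + d]_t ≠ 0`. -/
def SeparatesF {K : Type*} [Field K] (t : Kˣ) (n ℓ : ℕ) (κ : ℕ → ℤ) : Prop :=
  ((∏ d ∈ Finset.Icc 1 n, qint (t : K) (d : ℤ)) *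
      ∏ l ∈ Finset.range ℓ, ∏ m ∈ Finset.Ioo l ℓ,
        ∏ d ∈ Finset.Ioo (-(n : ℤ)) (n : ℤ), qint (t : K) (κ l - κ m + d)) ≠ 0

/-- `(O, t)` separates `Std(P_n)` (subring version): the separation element is a unit. -/
def SeparatesU {O : Type*} [CommRing O] (t : Oˣ) (n ℓ : ℕ) (κ : ℕ → ℤ) : Prop :=
  IsUnit ((∏ d ∈ Finset.Icc 1 n, qintU t (d : ℤ)) *
      ∏ l ∈ Finset.range ℓ, ∏ m ∈ Finset.Ioo l ℓ,
        ∏ d ∈ Finset.Ioo (-(n : ℤ)) (n : ℤ), qintU t (κ l - κ m + d))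

/-- `(O, t)` is an `e`-idempotent subring of the field `K`. -/
def IsIdempotentSubring {K : Type*} [Field K] (O : Subring K) (t : Oˣ) (e n ℓ : ℕ)
    (κ : ℕ → ℤ) : Prop :=
  SeparatesU t n ℓ κ ∧
    (∀ k : ℤ, ¬(e : ℤ) ∣ k → IsUnit (qintU t k)) ∧
    (∀ k : ℤ, (e : ℤ) ∣ k → qintU t k ∈ Ideal.jacobson (⊥ : Ideal O))

/-! ## The cyclotomic Hecke algebra, by generators and relations -/

/-- Generators `L_1, …, L_n`, `T_1, …, T_{n-1}` (here `0`-based). -/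
inductive HeckeGen (n : ℕ) : Type
  | L : Fin n → HeckeGen n
  | T : Fin (n - 1) → HeckeGen n

/-- The position `r` of the pair `(r, r+1)` interchanged by the `r`-th transposition. -/
def pL {n : ℕ} (r : Fin (n - 1)) : Fin n := ⟨r.1, by have := r.2; omega⟩

/-- The position `r + 1` of the pair interchanged by the `r`-th transposition. -/
def pR {n : ℕ} (r : Fin (n - 1)) : Fin n := ⟨r.1 + 1, by have := r.2; omega⟩

/-- The position `r + 2`, used in braid relations. -/
def pM {n : ℕ} (r : Fin (n - 1)) (hr : r.1 + 1 < n - 1) : Fin n := ⟨r.1 + 2, by omega⟩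

/-- The free algebra generator `L_k`. -/
def hL (R : Type*) [CommRing R] {n : ℕ} (k : Fin n) : FreeAlgebra R (HeckeGen n) :=
  FreeAlgebra.ι R (HeckeGen.L k)

/-- The free algebra generator `T_r`. -/
def hT (R : Type*) [CommRing R] {n : ℕ} (r : Fin (n - 1)) : FreeAlgebra R (HeckeGen n) :=
  FreeAlgebra.ι R (HeckeGen.T r)

/-- The defining relations of the integral cyclotomic Hecke algebra `H_n(R, t, κ)`. -/
inductive HeckeRel (R : Type*) [CommRing R] (t : Rˣ) (n ℓ : ℕ) (κ : ℕ → ℤ) :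
    FreeAlgebra R (HeckeGen n) → FreeAlgebra R (HeckeGen n) → Prop
  | cyc (h : 0 < n) :
      HeckeRel R t n ℓ κ
        (((List.range ℓ).map fun l =>
          hL R (⟨0, h⟩ : Fin n) - algebraMap R _ (qintU t (κ l))).prod) 0
  | quad (r : Fin (n - 1)) :
      HeckeRel R t n ℓ κ ((hT R r + 1) * (hT R r - algebraMap R _ (t : R))) 0
  | LL (k m : Fin n) : HeckeRel R t n ℓ κ (hL R k * hL R m) (hL R m * hL R k)
  | TTfar (r s : Fin (n - 1)) (h : r.1 + 1 < s.1 ∨ s.1 + 1 < r.1) :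
      HeckeRel R t n ℓ κ (hT R r * hT R s) (hT R s * hT R r)
  | braid (r s : Fin (n - 1)) (h : s.1 = r.1 + 1) :
      HeckeRel R t n ℓ κ (hT R r * hT R s * hT R r) (hT R s * hT R r * hT R s)
  | TL (r : Fin (n - 1)) (k : Fin n) (h : k.1 ≠ r.1 ∧ k.1 ≠ r.1 + 1) :
      HeckeRel R t n ℓ κ (hT R r * hL R k) (hL R k * hT R r)
  | LT (r : Fin (n - 1)) :
      HeckeRel R t n ℓ κ (hL R (pR r) * (hT R r - algebraMap R _ (t : R) + 1))
        (hT R r * hL R (pL r) + 1)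

/-- The integral cyclotomic Hecke algebra of type `A`, `H_n(R, t, κ)`. -/
noncomputable abbrev CycHecke (R : Type*) [CommRing R] (t : Rˣ) (n ℓ : ℕ) (κ : ℕ → ℤ) :
    Type _ :=
  RingQuot (HeckeRel R t n ℓ κ)

/-- The generator `L_k` of the cyclotomic Hecke algebra. -/
noncomputable def Lgen (R : Type*) [CommRing R] (t : Rˣ) (n ℓ : ℕ) (κ : ℕ → ℤ)
    (k : Fin n) : CycHecke R t n ℓ κ :=
  RingQuot.mkAlgHom R (HeckeRel R t n ℓ κ) (hL R k)

/-- The generator `T_r` of the cyclotomic Hecke algebra. -/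
noncomputable def Tgen (R : Type*) [CommRing R] (t : Rˣ) (n ℓ : ℕ) (κ : ℕ → ℤ)
    (r : Fin (n - 1)) : CycHecke R t n ℓ κ :=
  RingQuot.mkAlgHom R (HeckeRel R t n ℓ κ) (hT R r)

end Paper
/-! ## Quiver Hecke (KLR) algebras, by generators and relations -/

namespace Paper

/-- Generators `e(i)` (`i ∈ I^n`), `ψ_1, …, ψ_{n-1}`, `y_1, …, y_n` (here `0`-based). -/
inductive KLRGen (n e : ℕ) : Type
  | idem : (Fin n → ZMod e) → KLRGen n e
  | psi : Fin (n - 1) → KLRGen n e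
  | y : Fin n → KLRGen n e

/-- The free algebra generator `e(i)`. -/
def kE (R : Type*) [CommRing R] {n e : ℕ} (i : Fin n → ZMod e) :
    FreeAlgebra R (KLRGen n e) :=
  FreeAlgebra.ι R (KLRGen.idem i)

/-- The free algebra generator `ψ_r`. -/
def kPsi (R : Type*) [CommRing R] {n e : ℕ} (r : Fin (n - 1)) :
    FreeAlgebra R (KLRGen n e) :=
  FreeAlgebra.ι R (KLRGen.psi r)

/-- The free algebra generator `y_k`. -/
def kY (R : Type*) [CommRing R] {n e : ℕ} (k : Fin n) : FreeAlgebra R (KLRGen n e) :=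
  FreeAlgebra.ι R (KLRGen.y k)

/-- `s_r · i`: interchange the entries of `i` at positions `r` and `r + 1`. -/
def swapSeq {n e : ℕ} (i : Fin n → ZMod e) (r : Fin (n - 1)) : Fin n → ZMod e :=
  fun k => if k = pL r then i (pR r) else if k = pR r then i (pL r) else i k

/-- The defining relations of the cyclotomic quiver Hecke algebra `R_n^Λ(R)` where
`Λ = Σ_l Λ_{κ_l mod e}`. -/
inductive KLRRel (R : Type*) [CommRing R] (n e ℓ : ℕ) [NeZero e] (κ : ℕ → ℤ) :
    FreeAlgebra R (KLRGen n e) → FreeAlgebra R (KLRGen n e) → Prop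
  | cyc (h : 0 < n) (i : Fin n → ZMod e) :
      KLRRel R n e ℓ κ
        ((kY R (⟨0, h⟩ : Fin n)) ^
            (((Finset.range ℓ).filter fun l => ((κ l : ZMod e) = i ⟨0, h⟩)).card) *
          kE R i) 0
  | orth (i j : Fin n → ZMod e) (h : i ≠ j) : KLRRel R n e ℓ κ (kE R i * kE R j) 0
  | idem (i : Fin n → ZMod e) : KLRRel R n e ℓ κ (kE R i * kE R i) (kE R i)
  | complete : KLRRel R n e ℓ κ (∑ i : Fin n → ZMod e, kE R i) 1
  | yE (k : Fin n) (i : Fin n → ZMod e) :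
      KLRRel R n e ℓ κ (kY R k * kE R i) (kE R i * kY R k)
  | psiE (r : Fin (n - 1)) (i : Fin n → ZMod e) :
      KLRRel R n e ℓ κ (kPsi R r * kE R i) (kE R (swapSeq i r) * kPsi R r)
  | yy (k m : Fin n) : KLRRel R n e ℓ κ (kY R k * kY R m) (kY R m * kY R k)
  | psiyEq (r : Fin (n - 1)) (i : Fin n → ZMod e) (h : i (pL r) = i (pR r)) :
      KLRRel R n e ℓ κ (kPsi R r * kY R (pR r) * kE R i)
        ((kY R (pL r) * kPsi R r + 1) * kE R i)
  | psiyNe (r : Fin (n - 1)) (i : Fin n → ZMod e) (h : i (pL r) ≠ i (pR r)) :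
      KLRRel R n e ℓ κ (kPsi R r * kY R (pR r) * kE R i)
        (kY R (pL r) * kPsi R r * kE R i)
  | ypsiEq (r : Fin (n - 1)) (i : Fin n → ZMod e) (h : i (pL r) = i (pR r)) :
      KLRRel R n e ℓ κ (kY R (pR r) * kPsi R r * kE R i)
        ((kPsi R r * kY R (pL r) + 1) * kE R i)
  | ypsiNe (r : Fin (n - 1)) (i : Fin n → ZMod e) (h : i (pL r) ≠ i (pR r)) :
      KLRRel R n e ℓ κ (kY R (pR r) * kPsi R r * kE R i)
        (kPsi R r * kY R (pL r) * kE R i)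
  | psiyFar (r : Fin (n - 1)) (k : Fin n) (h : k.1 ≠ r.1 ∧ k.1 ≠ r.1 + 1) :
      KLRRel R n e ℓ κ (kPsi R r * kY R k) (kY R k * kPsi R r)
  | psipsiFar (r s : Fin (n - 1)) (h : r.1 + 1 < s.1 ∨ s.1 + 1 < r.1) :
      KLRRel R n e ℓ κ (kPsi R r * kPsi R s) (kPsi R s * kPsi R r)
  | quadEq (r : Fin (n - 1)) (i : Fin n → ZMod e) (h : i (pL r) = i (pR r)) :
      KLRRel R n e ℓ κ (kPsi R r ^ 2 * kE R i) 0
  | quadR (r : Fin (n - 1)) (i : Fin n → ZMod e)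
      (h1 : i (pR r) = i (pL r) + 1) (h2 : i (pL r) ≠ i (pR r) + 1) :
      KLRRel R n e ℓ κ (kPsi R r ^ 2 * kE R i) ((kY R (pL r) - kY R (pR r)) * kE R i)
  | quadL (r : Fin (n - 1)) (i : Fin n → ZMod e)
      (h1 : i (pL r) = i (pR r) + 1) (h2 : i (pR r) ≠ i (pL r) + 1) :
      KLRRel R n e ℓ κ (kPsi R r ^ 2 * kE R i) ((kY R (pR r) - kY R (pL r)) * kE R i)
  | quadBoth (r : Fin (n - 1)) (i : Fin n → ZMod e)
      (h1 : i (pR r) = i (pL r) + 1) (h2 : i (pL r) = i (pR r) + 1) :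
      KLRRel R n e ℓ κ (kPsi R r ^ 2 * kE R i)
        ((kY R (pR r) - kY R (pL r)) * (kY R (pL r) - kY R (pR r)) * kE R i)
  | quadNone (r : Fin (n - 1)) (i : Fin n → ZMod e) (h1 : i (pL r) ≠ i (pR r))
      (h2 : i (pR r) ≠ i (pL r) + 1) (h3 : i (pL r) ≠ i (pR r) + 1) :
      KLRRel R n e ℓ κ (kPsi R r ^ 2 * kE R i) (kE R i)
  | braidR (r : Fin (n - 1)) (hr : r.1 + 1 < n - 1) (i : Fin n → ZMod e)
      (h0 : i (pM r hr) = i (pL r)) (h1 : i (pR r) = i (pL r) + 1)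
      (h2 : i (pL r) ≠ i (pR r) + 1) :
      KLRRel R n e ℓ κ (kPsi R r * kPsi R ⟨r.1 + 1, hr⟩ * kPsi R r * kE R i)
        ((kPsi R ⟨r.1 + 1, hr⟩ * kPsi R r * kPsi R ⟨r.1 + 1, hr⟩ - 1) * kE R i)
  | braidL (r : Fin (n - 1)) (hr : r.1 + 1 < n - 1) (i : Fin n → ZMod e)
      (h0 : i (pM r hr) = i (pL r)) (h1 : i (pL r) = i (pR r) + 1)
      (h2 : i (pR r) ≠ i (pL r) + 1) :
      KLRRel R n e ℓ κ (kPsi R r * kPsi R ⟨r.1 + 1, hr⟩ * kPsi R r * kE R i)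
        ((kPsi R ⟨r.1 + 1, hr⟩ * kPsi R r * kPsi R ⟨r.1 + 1, hr⟩ + 1) * kE R i)
  | braidBoth (r : Fin (n - 1)) (hr : r.1 + 1 < n - 1) (i : Fin n → ZMod e)
      (h0 : i (pM r hr) = i (pL r)) (h1 : i (pR r) = i (pL r) + 1)
      (h2 : i (pL r) = i (pR r) + 1) :
      KLRRel R n e ℓ κ (kPsi R r * kPsi R ⟨r.1 + 1, hr⟩ * kPsi R r * kE R i)
        ((kPsi R ⟨r.1 + 1, hr⟩ * kPsi R r * kPsi R ⟨r.1 + 1, hr⟩ +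
            kY R (pL r) - 2 * kY R (pR r) + kY R (pM r hr)) * kE R i)
  | braidNone (r : Fin (n - 1)) (hr : r.1 + 1 < n - 1) (i : Fin n → ZMod e)
      (h : ¬(i (pM r hr) = i (pL r) ∧
        (i (pR r) = i (pL r) + 1 ∨ i (pL r) = i (pR r) + 1))) :
      KLRRel R n e ℓ κ (kPsi R r * kPsi R ⟨r.1 + 1, hr⟩ * kPsi R r * kE R i)
        (kPsi R ⟨r.1 + 1, hr⟩ * kPsi R r * kPsi R ⟨r.1 + 1, hr⟩ * kE R i)

/-- The cyclotomic quiver Hecke algebra `R_n^Λ(R)`, `Λ = Σ_l Λ_{κ_l mod e}`. -/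
noncomputable abbrev KLR (R : Type*) [CommRing R] (n e ℓ : ℕ) [NeZero e] (κ : ℕ → ℤ) :
    Type _ :=
  RingQuot (KLRRel R n e ℓ κ)

/-- The generator `e(i)` of the cyclotomic quiver Hecke algebra. -/
noncomputable def KeGen (R : Type*) [CommRing R] (n e ℓ : ℕ) [NeZero e] (κ : ℕ → ℤ)
    (i : Fin n → ZMod e) : KLR R n e ℓ κ :=
  RingQuot.mkAlgHom R (KLRRel R n e ℓ κ) (kE R i)

/-- The generator `ψ_r` of the cyclotomic quiver Hecke algebra. -/
noncomputable def KpsiGen (R : Type*) [CommRing R] (n e ℓ : ℕ) [NeZero e] (κ : ℕ → ℤ)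
    (r : Fin (n - 1)) : KLR R n e ℓ κ :=
  RingQuot.mkAlgHom R (KLRRel R n e ℓ κ) (kPsi R r)

/-- The generator `y_k` of the cyclotomic quiver Hecke algebra. -/
noncomputable def KyGen (R : Type*) [CommRing R] (n e ℓ : ℕ) [NeZero e] (κ : ℕ → ℤ)
    (k : Fin n) : KLR R n e ℓ κ :=
  RingQuot.mkAlgHom R (KLRRel R n e ℓ κ) (kY R k)

end Paper
/-! ## The deformed cyclotomic quiver Hecke algebra -/

namespace Paper

/-- `y_k^⟨d⟩ = t^d y_k + [d]_t` in the free algebra. -/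
def ydot (R : Type*) [CommRing R] (t : Rˣ) {n e : ℕ} (d : ℤ) (k : Fin n) :
    FreeAlgebra R (KLRGen n e) :=
  algebraMap R _ ((t ^ d : Rˣ) : R) * kY R k + algebraMap R _ (qintU t d)

/-- `ρ_r(i) = î_r - î_{r+1}` for `i ∈ I^n`. -/
def rhoI {n e : ℕ} (i : Fin n → ZMod e) (r : Fin (n - 1)) : ℤ :=
  ((i (pL r)).val : ℤ) - ((i (pR r)).val : ℤ)

/-- The defining relations of the deformed cyclotomic quiver Hecke algebra `R_n(O)`. -/
inductive DefKLRRel (R : Type*) [CommRing R] (t : Rˣ) (n e ℓ : ℕ) [NeZero e] (κ : ℕ → ℤ) :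
    FreeAlgebra R (KLRGen n e) → FreeAlgebra R (KLRGen n e) → Prop
  | cyc (h : 0 < n) (i : Fin n → ZMod e) :
      DefKLRRel R t n e ℓ κ
        ((((List.range ℓ).map fun l =>
            if ((κ l : ZMod e) = i ⟨0, h⟩) then
              kY R (⟨0, h⟩ : Fin n) -
                algebraMap R _ (qintU t (κ l - ((i ⟨0, h⟩).val : ℤ)))
            else 1).prod) * kE R i) 0
  | orth (i j : Fin n → ZMod e) (h : i ≠ j) : DefKLRRel R t n e ℓ κ (kE R i * kE R j) 0
  | idem (i : Fin n → ZMod e) : DefKLRRel R t n e ℓ κ (kE R i * kE R i) (kE R i)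
  | complete : DefKLRRel R t n e ℓ κ (∑ i : Fin n → ZMod e, kE R i) 1
  | yE (k : Fin n) (i : Fin n → ZMod e) :
      DefKLRRel R t n e ℓ κ (kY R k * kE R i) (kE R i * kY R k)
  | psiE (r : Fin (n - 1)) (i : Fin n → ZMod e) :
      DefKLRRel R t n e ℓ κ (kPsi R r * kE R i) (kE R (swapSeq i r) * kPsi R r)
  | yy (k m : Fin n) : DefKLRRel R t n e ℓ κ (kY R k * kY R m) (kY R m * kY R k)
  | psiyEq (r : Fin (n - 1)) (i : Fin n → ZMod e) (h : i (pL r) = i (pR r)) :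
      DefKLRRel R t n e ℓ κ (kPsi R r * kY R (pR r) * kE R i)
        ((kY R (pL r) * kPsi R r + 1) * kE R i)
  | psiyNe (r : Fin (n - 1)) (i : Fin n → ZMod e) (h : i (pL r) ≠ i (pR r)) :
      DefKLRRel R t n e ℓ κ (kPsi R r * kY R (pR r) * kE R i)
        (kY R (pL r) * kPsi R r * kE R i)
  | ypsiEq (r : Fin (n - 1)) (i : Fin n → ZMod e) (h : i (pL r) = i (pR r)) :
      DefKLRRel R t n e ℓ κ (kY R (pR r) * kPsi R r * kE R i)
        ((kPsi R r * kY R (pL r) + 1) * kE R i)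
  | ypsiNe (r : Fin (n - 1)) (i : Fin n → ZMod e) (h : i (pL r) ≠ i (pR r)) :
      DefKLRRel R t n e ℓ κ (kY R (pR r) * kPsi R r * kE R i)
        (kPsi R r * kY R (pL r) * kE R i)
  | psiyFar (r : Fin (n - 1)) (k : Fin n) (h : k.1 ≠ r.1 ∧ k.1 ≠ r.1 + 1) :
      DefKLRRel R t n e ℓ κ (kPsi R r * kY R k) (kY R k * kPsi R r)
  | psipsiFar (r s : Fin (n - 1)) (h : r.1 + 1 < s.1 ∨ s.1 + 1 < r.1) :
      DefKLRRel R t n e ℓ κ (kPsi R r * kPsi R s) (kPsi R s * kPsi R r)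
  | quadEq (r : Fin (n - 1)) (i : Fin n → ZMod e) (h : i (pL r) = i (pR r)) :
      DefKLRRel R t n e ℓ κ (kPsi R r ^ 2 * kE R i) 0
  | quadR (r : Fin (n - 1)) (i : Fin n → ZMod e)
      (h1 : i (pR r) = i (pL r) + 1) (h2 : i (pL r) ≠ i (pR r) + 1) :
      DefKLRRel R t n e ℓ κ (kPsi R r ^ 2 * kE R i)
        ((ydot R t (1 + rhoI i r) (pL r) - kY R (pR r)) * kE R i)
  | quadL (r : Fin (n - 1)) (i : Fin n → ZMod e)
      (h1 : i (pL r) = i (pR r) + 1) (h2 : i (pR r) ≠ i (pL r) + 1) :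
      DefKLRRel R t n e ℓ κ (kPsi R r ^ 2 * kE R i)
        ((ydot R t (1 - rhoI i r) (pR r) - kY R (pL r)) * kE R i)
  | quadBoth (r : Fin (n - 1)) (i : Fin n → ZMod e)
      (h1 : i (pR r) = i (pL r) + 1) (h2 : i (pL r) = i (pR r) + 1) :
      DefKLRRel R t n e ℓ κ (kPsi R r ^ 2 * kE R i)
        ((ydot R t (1 + rhoI i r) (pL r) - kY R (pR r)) *
          (ydot R t (1 - rhoI i r) (pR r) - kY R (pL r)) * kE R i)
  | quadNone (r : Fin (n - 1)) (i : Fin n → ZMod e) (h1 : i (pL r) ≠ i (pR r))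
      (h2 : i (pR r) ≠ i (pL r) + 1) (h3 : i (pL r) ≠ i (pR r) + 1) :
      DefKLRRel R t n e ℓ κ (kPsi R r ^ 2 * kE R i) (kE R i)
  | braidBoth (r : Fin (n - 1)) (hr : r.1 + 1 < n - 1) (i : Fin n → ZMod e)
      (h0 : i (pM r hr) = i (pL r)) (h1 : i (pR r) = i (pL r) + 1)
      (h2 : i (pL r) = i (pR r) + 1) :
      DefKLRRel R t n e ℓ κ
        ((kPsi R r * kPsi R ⟨r.1 + 1, hr⟩ * kPsi R r -
            kPsi R ⟨r.1 + 1, hr⟩ * kPsi R r * kPsi R ⟨r.1 + 1, hr⟩) * kE R i)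
        ((ydot R t (1 + rhoI i r) (pL r) + ydot R t (1 + rhoI i r) (pM r hr) -
            ydot R t (1 + rhoI i r) (pR r) - ydot R t (1 - rhoI i r) (pR r)) * kE R i)
  | braidR (r : Fin (n - 1)) (hr : r.1 + 1 < n - 1) (i : Fin n → ZMod e)
      (h0 : i (pM r hr) = i (pL r)) (h1 : i (pR r) = i (pL r) + 1)
      (h2 : i (pL r) ≠ i (pR r) + 1) :
      DefKLRRel R t n e ℓ κ
        ((kPsi R r * kPsi R ⟨r.1 + 1, hr⟩ * kPsi R r -
            kPsi R ⟨r.1 + 1, hr⟩ * kPsi R r * kPsi R ⟨r.1 + 1, hr⟩) * kE R i)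
        (algebraMap R _ (-(((t ^ (1 + rhoI i r) : Rˣ) : R))) * kE R i)
  | braidL (r : Fin (n - 1)) (hr : r.1 + 1 < n - 1) (i : Fin n → ZMod e)
      (h0 : i (pM r hr) = i (pL r)) (h1 : i (pL r) = i (pR r) + 1)
      (h2 : i (pR r) ≠ i (pL r) + 1) :
      DefKLRRel R t n e ℓ κ
        ((kPsi R r * kPsi R ⟨r.1 + 1, hr⟩ * kPsi R r -
            kPsi R ⟨r.1 + 1, hr⟩ * kPsi R r * kPsi R ⟨r.1 + 1, hr⟩) * kE R i)
        (kE R i)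
  | braidNone (r : Fin (n - 1)) (hr : r.1 + 1 < n - 1) (i : Fin n → ZMod e)
      (h : ¬(i (pM r hr) = i (pL r) ∧
        (i (pR r) = i (pL r) + 1 ∨ i (pL r) = i (pR r) + 1))) :
      DefKLRRel R t n e ℓ κ
        ((kPsi R r * kPsi R ⟨r.1 + 1, hr⟩ * kPsi R r -
            kPsi R ⟨r.1 + 1, hr⟩ * kPsi R r * kPsi R ⟨r.1 + 1, hr⟩) * kE R i) 0

/-- The deformed cyclotomic quiver Hecke algebra `R_n(R)`. -/
noncomputable abbrev DefKLR (R : Type*) [CommRing R] (t : Rˣ) (n e ℓ : ℕ) [NeZero e]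
    (κ : ℕ → ℤ) : Type _ :=
  RingQuot (DefKLRRel R t n e ℓ κ)

/-- The generator `f_i` of the deformed cyclotomic quiver Hecke algebra. -/
noncomputable def DfGen (R : Type*) [CommRing R] (t : Rˣ) (n e ℓ : ℕ) [NeZero e]
    (κ : ℕ → ℤ) (i : Fin n → ZMod e) : DefKLR R t n e ℓ κ :=
  RingQuot.mkAlgHom R (DefKLRRel R t n e ℓ κ) (kE R i)

/-- The generator `ψ_r` of the deformed cyclotomic quiver Hecke algebra. -/
noncomputable def DpsiGen (R : Type*) [CommRing R] (t : Rˣ) (n e ℓ : ℕ) [NeZero e]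
    (κ : ℕ → ℤ) (r : Fin (n - 1)) : DefKLR R t n e ℓ κ :=
  RingQuot.mkAlgHom R (DefKLRRel R t n e ℓ κ) (kPsi R r)

/-- The generator `y_k` of the deformed cyclotomic quiver Hecke algebra. -/
noncomputable def DyGen (R : Type*) [CommRing R] (t : Rˣ) (n e ℓ : ℕ) [NeZero e]
    (κ : ℕ → ℤ) (k : Fin n) : DefKLR R t n e ℓ κ :=
  RingQuot.mkAlgHom R (DefKLRRel R t n e ℓ κ) (kY R k)

/-! ## Seminormal idempotents -/

/-- The seminormal idempotent `F_T` of the semisimple cyclotomic Hecke algebra: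
`F_T = ∏_{k=1}^n ∏_{c ∈ Cont(n), [c_k(T)] ≠ [c]} (L_k - [c]) / ([c_k(T)] - [c])`. -/
noncomputable def Fidem (K : Type*) [Field K] (tK : Kˣ) (n ℓ : ℕ) (κ : ℕ → ℤ)
    (T : StdTableau ℓ n) : CycHecke K tK n ℓ κ :=
  ((List.finRange n).map (fun k =>
    (((contFinset ℓ n κ).sort (· ≤ ·)).map (fun c =>
      if qint (tK : K) (content κ T (k.1 + 1)) ≠ qint (tK : K) c then
        (Lgen K tK n ℓ κ k - algebraMap K _ (qint (tK : K) c)) *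
          algebraMap K _ ((qint (tK : K) (content κ T (k.1 + 1)) - qint (tK : K) c)⁻¹)
      else 1)).prod)).prod

/-- The residue idempotent `f_i = Σ_{T ∈ Std(i)} F_T`. -/
noncomputable def fres (K : Type*) [Field K] (tK : Kˣ) (n ℓ e : ℕ) (κ : ℕ → ℤ)
    (i : Fin n → ZMod e) : CycHecke K tK n ℓ κ :=
  ∑ᶠ T : {T : StdTableau ℓ n // resSeq e κ T = i}, Fidem K tK n ℓ κ T.1

/-- The simultaneous two-sided eigenspace `H_{S,T}` of the Jucys–Murphy elements. -/
noncomputable def eigSub (K : Type*) [Field K] (tK : Kˣ) (n ℓ : ℕ) (κ : ℕ → ℤ)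
    (S T : StdTableau ℓ n) : Submodule K (CycHecke K tK n ℓ κ) where
  carrier := {h | ∀ k : Fin n,
      Lgen K tK n ℓ κ k * h = qint (tK : K) (content κ S (k.1 + 1)) • h ∧
      h * Lgen K tK n ℓ κ k = qint (tK : K) (content κ T (k.1 + 1)) • h}
  add_mem' := by
    intro a b ha hb
    intro k
    obtain ⟨h1, h2⟩ := ha k
    obtain ⟨h3, h4⟩ := hb k
    exact ⟨by rw [mul_add, h1, h3, smul_add], by rw [add_mul, h2, h4, smul_add]⟩
  zero_mem' := by intro k; simp
  smul_mem' := by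
    intro c a ha
    intro k
    obtain ⟨h1, h2⟩ := ha k
    constructor
    · rw [mul_smul_comm, h1, smul_comm]
    · rw [smul_mul_assoc, h2, smul_comm]

end Paper

namespace Paper

/-- swap the letters at positions r, r+1 of a word -/
def swW {e : ℕ} (r : ℕ) (w : ℕ → ZMod e) : ℕ → ZMod e := fun k => w (Equiv.swap r (r+1) k)

/-- abstract form of the relations of the cyclotomic quiver Hecke algebra -/
structure KD {R : Type*} [Ring R] (e n : ℕ) (y ψ : ℕ → R) (E : (ℕ → ZMod e) → R)
    (lam : ZMod e → ℕ) : Prop where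
  yy : ∀ k m, Commute (y k) (y m)
  yE : ∀ k w, Commute (y k) (E w)
  psiE : ∀ r w, r + 1 < n → ψ r * E w = E (swW r w) * ψ r
  far : ∀ r k, r + 1 < n → k ≠ r → k ≠ r + 1 → Commute (ψ r) (y k)
  ne1 : ∀ r w, r + 1 < n → w r ≠ w (r+1) → ψ r * y (r+1) * E w = y r * ψ r * E w
  ne2 : ∀ r w, r + 1 < n → w r ≠ w (r+1) → ψ r * y r * E w = y (r+1) * ψ r * E w
  eq1 : ∀ r w, r + 1 < n → w r = w (r+1) → ψ r * y (r+1) * E w = y r * ψ r * E w + E w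
  eq2 : ∀ r w, r + 1 < n → w r = w (r+1) → y (r+1) * ψ r * E w = ψ r * y r * E w + E w
  qEq : ∀ r w, r + 1 < n → w r = w (r+1) → ψ r * ψ r * E w = 0
  qNone : ∀ r w, r + 1 < n → w r ≠ w (r+1) → w (r+1) ≠ w r + 1 → w r ≠ w (r+1) + 1 →
    ψ r * ψ r * E w = E w
  qNbr : ∀ r w, r + 1 < n → (w (r+1) = w r + 1 ∨ w r = w (r+1) + 1) →
    (y (r+1) - y r) * E w = ψ r * ψ r * E w ∨ (y (r+1) - y r) * E w = - (ψ r * ψ r * E w)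
  braid : ∀ r w, r + 2 < n → w (r+2) = w r → (w (r+1) = w r + 1 ∨ w r = w (r+1) + 1) →
    E w = (ψ r * ψ (r+1) * ψ r - ψ (r+1) * ψ r * ψ (r+1)) * E w ∨
    E w = (ψ (r+1) * ψ r * ψ (r+1) - ψ r * ψ (r+1) * ψ r) * E w
  cyc : ∀ w, 0 < n → y 0 ^ lam (w 0) * E w = 0

section words
variable {e : ℕ}

theorem swW_l (r : ℕ) (w : ℕ → ZMod e) : swW r w r = w (r+1) := by simp [swW]
theorem swW_r (r : ℕ) (w : ℕ → ZMod e) : swW r w (r+1) = w r := by simp [swW]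
theorem swW_o (r k : ℕ) (w : ℕ → ZMod e) (h1 : k ≠ r) (h2 : k ≠ r+1) : swW r w k = w k := by
  simp [swW, Equiv.swap_apply_of_ne_of_ne h1 h2]
theorem swW_eq (r : ℕ) (w : ℕ → ZMod e) (h : w r = w (r+1)) : swW r w = w := by
  funext k
  by_cases h1 : k = r
  · subst h1; rw [swW_l, h]
  by_cases h2 : k = r+1
  · subst h2; rw [swW_r, h]
  exact swW_o r k w h1 h2

/-- multiplicity of the letter x among the first m letters -/
def dW (w : ℕ → ZMod e) (x : ZMod e) : ℕ → ℕ
  | 0 => 0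
  | m+1 => dW w x m + if w m = x then 1 else 0

theorem dW_congr (w w' : ℕ → ZMod e) (x : ZMod e) (m : ℕ) (h : ∀ j < m, w j = w' j) :
    dW w x m = dW w' x m := by
  induction m with
  | zero => rfl
  | succ m ih =>
    simp only [dW]
    rw [ih (fun j hj => h j (by omega)), h m (by omega)]

theorem dW_sw_lo (r : ℕ) (w : ℕ → ZMod e) (x : ZMod e) (m : ℕ) (h : m ≤ r) :
    dW (swW r w) x m = dW w x m :=
  dW_congr _ _ _ _ (fun j hj => swW_o r j w (by omega) (by omega))

theorem dW_sw (r : ℕ) (w : ℕ → ZMod e) (x : ZMod e) (m : ℕ) (h : r + 1 < m) :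
    dW (swW r w) x m = dW w x m := by
  induction m with
  | zero => omega
  | succ m ih =>
    by_cases hm : m = r + 1
    · subst hm
      simp only [dW]
      rw [dW_sw_lo r w x r le_rfl, swW_l, swW_r]; omega
    · simp only [dW]
      rw [ih (by omega), swW_o r m w (by omega) hm]

theorem dW_zero (w : ℕ → ZMod e) (x : ZMod e) (m : ℕ) (h : ∀ j < m, w j ≠ x) : dW w x m = 0 := by
  induction m with
  | zero => rfl
  | succ m ih =>
    simp only [dW]
    rw [ih (fun j hj => h j (by omega)), if_neg (h m (by omega))]
end words

section series
open PowerSeries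
variable {R : Type*} [Ring R] {e : ℕ}

/-- geometric series -/
noncomputable def geo (a : R) : PowerSeries R := PowerSeries.mk (fun k => a ^ k)
/-- linear factor -/
noncomputable def lin (a : R) : PowerSeries R := 1 - PowerSeries.C a * PowerSeries.X

theorem coeff_C_mul' (k : ℕ) (a : R) (F : PowerSeries R) :
    coeff k (C a * F) = a * coeff k F := by simp
theorem coeff_mul_C' (k : ℕ) (a : R) (F : PowerSeries R) :
    coeff k (F * C a) = coeff k F * a := by simp

theorem geo_lin (a : R) : geo a * lin a = 1 := by
  ext k
  simp only [geo, lin, mul_sub, mul_one, ← mul_assoc]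
  cases k with
  | zero => simp
  | succ k =>
    rw [map_sub, coeff_succ_mul_X]
    simp [coeff_one, pow_succ]
theorem lin_geo (a : R) : lin a * geo a = 1 := by
  ext k
  simp only [geo, lin, sub_mul, one_mul, mul_assoc, (commute_X _).eq.symm]
  cases k with
  | zero => simp
  | succ k =>
    rw [map_sub, coeff_C_mul', coeff_succ_mul_X]
    simp [coeff_one, pow_succ']

theorem comm_X (F : PowerSeries R) : Commute F X := (PowerSeries.commute_X F)

theorem comm_lin {F : PowerSeries R} {a : R} (h : Commute F (C a)) : Commute F (lin a) := by
  unfold lin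
  exact (Commute.one_right F).sub_right (h.mul_right (comm_X F))
theorem comm_geo {F : PowerSeries R} {a : R} (h : Commute F (C a)) : Commute F (geo a) := by
  have h1 := comm_lin h
  have : F * geo a = geo a * (lin a * F) * geo a := by
    rw [← mul_assoc (geo a), geo_lin, one_mul]
  unfold Commute SemiconjBy
  rw [this, ← h1.eq, mul_assoc, mul_assoc, lin_geo, mul_one]

theorem comm_CC {a b : R} (h : Commute a b) : Commute (C a) (C b : PowerSeries R) := by
  unfold Commute SemiconjBy at *
  rw [← map_mul, ← map_mul, h]

/-- local factor -/
noncomputable def phi (σ c x : ZMod e) (a : R) : PowerSeries R :=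
  if x = c then geo a else if x = c + σ then lin a else 1

theorem comm_phi {F : PowerSeries R} {a : R} (h : Commute F (C a)) (σ c x : ZMod e) :
    Commute F (phi σ c x a) := by
  unfold phi
  split_ifs
  · exact comm_geo h
  · exact comm_lin h
  · exact Commute.one_right _

/-- the generating series -/
noncomputable def HS (y : ℕ → R) (σ c : ZMod e) (w : ℕ → ZMod e) : ℕ → PowerSeries R
  | 0 => 1
  | m+1 => HS y σ c w m * phi σ c (w m) (y m)

theorem HS_congr (y : ℕ → R) (σ c : ZMod e) (w w' : ℕ → ZMod e) (m : ℕ) (h : ∀ j < m, w j = w' j) :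
    HS y σ c w m = HS y σ c w' m := by
  induction m with
  | zero => rfl
  | succ m ih =>
    simp only [HS]
    rw [ih (fun j hj => h j (by omega)), h m (by omega)]

theorem HS_sw_lo (y : ℕ → R) (σ c : ZMod e) (r : ℕ) (w : ℕ → ZMod e) (m : ℕ) (h : m ≤ r) :
    HS y σ c (swW r w) m = HS y σ c w m :=
  HS_congr _ _ _ _ _ _ (fun j hj => swW_o r j w (by omega) (by omega))

theorem HS_one (y : ℕ → R) (σ c : ZMod e) (w : ℕ → ZMod e) (m : ℕ)
    (h : ∀ j < m, w j ≠ c ∧ w j ≠ c + σ) : HS y σ c w m = 1 := by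
  induction m with
  | zero => rfl
  | succ m ih =>
    have := h m (by omega)
    simp only [HS]
    rw [ih (fun j hj => h j (by omega)), phi, if_neg this.1, if_neg this.2, one_mul]

theorem comm_HS {F : PowerSeries R} {y : ℕ → R} (σ c : ZMod e) (w : ℕ → ZMod e) (m : ℕ)
    (h : ∀ j < m, Commute F (C (y j))) : Commute F (HS y σ c w m) := by
  induction m with
  | zero => exact Commute.one_right _
  | succ m ih =>
    simp only [HS]
    exact (ih (fun j hj => h j (by omega))).mul_right (comm_phi (h m (by omega)) _ _ _)

theorem comm_coeff {F : PowerSeries R} {a : R} (h : Commute (C a) F) (k : ℕ) :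
    Commute a (coeff k F) := by
  unfold Commute SemiconjBy at *
  rw [← coeff_C_mul', h, coeff_mul_C']

end series

section main
open PowerSeries
variable {R : Type*} [Ring R] {e n : ℕ} {y ψ : ℕ → R} {E : (ℕ → ZMod e) → R} {lam : ZMod e → ℕ}

theorem KD.cy (D : KD e n y ψ E lam) (σ c : ZMod e) (w : ℕ → ZMod e) (m k j : ℕ) :
    Commute (y j) (coeff k (HS y σ c w m)) :=
  comm_coeff (comm_HS _ _ _ _ (fun i _ => comm_CC (D.yy j i))) k

theorem KD.cE (D : KD e n y ψ E lam) (σ c : ZMod e) (w v : ℕ → ZMod e) (m k : ℕ) :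
    Commute (E v) (coeff k (HS y σ c w m)) :=
  comm_coeff (comm_HS _ _ _ _ (fun i _ => comm_CC (D.yE i v).symm)) k

/-- distinct letters: one factor moves through -/
theorem lin1 (ψ : ℕ → R) (E : (ℕ → ZMod e) → R) (r : ℕ) (w : ℕ → ZMod e)
    {a b : R} (h : ψ r * a * E w = b * ψ r * E w) :
    C (ψ r) * lin a * C (E w) = lin b * C (ψ r) * C (E w) := by
  have h' : C (ψ r) * C a * C (E w) = (C b * C (ψ r) * C (E w) : PowerSeries R) := by
    simp only [← map_mul, h]
  unfold lin
  have e1 : (C a * X : PowerSeries R) = X * C a := (comm_X _).eq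
  have e2 : (C b * X : PowerSeries R) = X * C b := (comm_X _).eq
  have e3 : (C (ψ r) * X : PowerSeries R) = X * C (ψ r) := (comm_X _).eq
  rw [e1, e2, mul_sub, sub_mul, sub_mul, sub_mul, mul_one, one_mul, ← mul_assoc, e3]
  simp only [mul_assoc] at h' ⊢
  rw [h']

theorem geo_move {p q F F' Q Q' : PowerSeries R} (h : p * F * q = F' * p * q)
    (hq : Commute Q q) (h1 : F * Q = 1) (h2 : Q' * F' = 1) : p * Q * q = Q' * p * q := by
  have : Q' * (p * F * q) * Q = p * q * Q := by
    rw [h]; simp only [← mul_assoc]; rw [h2, one_mul]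
  rw [mul_assoc p Q q, hq.eq, ← mul_assoc, ← this, mul_assoc Q', mul_assoc (p*F), ← hq.eq,
    ← mul_assoc (p*F), mul_assoc p F Q, h1, mul_one]
  simp only [mul_assoc]

theorem phi1 (ψ : ℕ → R) (E : (ℕ → ZMod e) → R) (r : ℕ) (w : ℕ → ZMod e)
    {a b : R} (h : ψ r * a * E w = b * ψ r * E w) (ha : Commute a (E w)) (σ c x : ZMod e) :
    C (ψ r) * phi σ c x a * C (E w) = phi σ c x b * C (ψ r) * C (E w) := by
  have h1 := lin1 ψ E r w h
  unfold phi
  split_ifs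
  · exact geo_move h1 (comm_geo (comm_CC ha.symm)).symm (lin_geo a) (geo_lin b)
  · exact h1
  · simp

theorem KD.phi2 (D : KD e n y ψ E lam) (r : ℕ) (w : ℕ → ZMod e) (hr : r + 1 < n)
    (hw : w r = w (r+1)) (σ c x : ZMod e) :
    C (ψ r) * (phi σ c x (y r) * phi σ c x (y (r+1))) * C (E w)
      = (phi σ c x (y r) * phi σ c x (y (r+1))) * C (ψ r) * C (E w) := by
  have hyy : Commute (C (y r)) (C (y (r+1)) : PowerSeries R) := comm_CC (D.yy _ _)
  have hl : Commute (lin (y r)) (lin (y (r+1))) :=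
    comm_lin (comm_lin hyy.symm).symm
  have key : C (ψ r) * (lin (y r) * lin (y (r+1))) * C (E w)
      = (lin (y r) * lin (y (r+1))) * C (ψ r) * C (E w) := by
    have a1 := D.eq1 r w hr hw
    have a2 := D.eq2 r w hr hw
    have a3 := D.yE (r+1) w
    have a4 : ψ r * (y r * y (r+1)) * E w = (y r * y (r+1)) * ψ r * E w := by
      calc ψ r * (y r * y (r+1)) * E w = (ψ r * y r * E w) * y (r+1) := by
              simp only [mul_assoc]; rw [a3.eq]
        _ = (y (r+1) * ψ r * E w - E w) * y (r+1) := by rw [a2]; simp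
        _ = y (r+1) * (ψ r * y (r+1) * E w) - y (r+1) * E w := by
              rw [sub_mul, a3.eq]; simp only [mul_assoc]; rw [a3.eq]
        _ = _ := by rw [a1, mul_add, (D.yy r (r+1)).eq]; simp [mul_assoc]
    have a5 : ψ r * (y r + y (r+1)) * E w = (y r + y (r+1)) * ψ r * E w := by
      simp only [mul_add, add_mul]; rw [a1, a2]; abel
    have hP : lin (y r) * lin (y (r+1)) = 1 - C (y r + y (r+1)) * X + C (y r * y (r+1)) * X * X := by
      unfold lin
      have : (X * C (y (r+1)) : PowerSeries R) = C (y (r+1)) * X := (comm_X _).eq.symm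
      have e4 : ∀ z : PowerSeries R, X * (C (y (r+1)) * z) = C (y (r+1)) * (X * z) := fun z => by
        rw [← mul_assoc, this, mul_assoc]
      simp only [map_add, map_mul, sub_mul, mul_sub, one_mul, mul_one, add_mul, mul_assoc, e4]
      abel
    rw [hP]
    have c4 : C (ψ r) * C (y r * y (r+1)) * C (E w) = (C (y r * y (r+1)) * C (ψ r) * C (E w) : PowerSeries R) := by
      simp only [← map_mul, a4]
    have c5 : C (ψ r) * C (y r + y (r+1)) * C (E w) = (C (y r + y (r+1)) * C (ψ r) * C (E w) : PowerSeries R) := by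
      simp only [← map_mul, a5]
    generalize (C (y r * y (r+1)) : PowerSeries R) = u at *
    generalize (C (y r + y (r+1)) : PowerSeries R) = v at *
    have e1 : u * X = X * u := (comm_X _).eq
    have e2 : v * X = X * v := (comm_X _).eq
    have e3 : (C (ψ r) * X : PowerSeries R) = X * C (ψ r) := (comm_X _).eq
    have e4 : ∀ z : PowerSeries R, C (ψ r) * (X * z) = X * (C (ψ r) * z) := fun z => by
      rw [← mul_assoc, e3, mul_assoc]
    rw [e1, e2, mul_assoc X u X, e1]
    simp only [mul_add, mul_sub, add_mul, sub_mul, mul_one, one_mul, mul_assoc, e4] at c4 c5 ⊢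
    rw [c4, c5]
  unfold phi
  split_ifs
  · have hg1 : Commute (geo (y (r+1))) (C (E w)) := (comm_geo (comm_CC (D.yE (r+1) w).symm)).symm
    have hg2 : Commute (geo (y r)) (C (E w)) := (comm_geo (comm_CC (D.yE r w).symm)).symm
    refine geo_move key (hg2.mul_left hg1) ?_ ?_
    · rw [hl.eq, mul_assoc, ← mul_assoc (lin (y r)), lin_geo, one_mul, lin_geo]
    · rw [hl.eq]
      have : geo (y r) * geo (y (r+1)) * (lin (y (r+1)) * lin (y r)) =
        geo (y r) * (geo (y (r+1)) * lin (y (r+1))) * lin (y r) := by simp only [mul_assoc]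
      rw [this, geo_lin, mul_one, geo_lin]
  · exact key
  · simp

theorem KD.psiHS (D : KD e n y ψ E lam) (r : ℕ) (w : ℕ → ZMod e) (hr : r + 1 < n)
    (σ c : ZMod e) : C (ψ r) * HS y σ c w r = HS y σ c w r * C (ψ r) :=
  (comm_HS _ _ _ _ (fun j hj => comm_CC (D.far r j hr (by omega) (by omega)))).eq

theorem KD.inter (D : KD e n y ψ E lam) (r : ℕ) (w : ℕ → ZMod e) (hr : r + 1 < n)
    (σ c : ZMod e) (m : ℕ) (hm : r + 1 < m) :
    C (ψ r) * HS y σ c w m * C (E w) = HS y σ c (swW r w) m * C (ψ r) * C (E w) := by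
  induction m with
  | zero => omega
  | succ m ih =>
    by_cases h : m = r + 1
    · subst h
      simp only [HS]
      rw [HS_sw_lo y σ c r w r le_rfl, swW_l, swW_r]
      rw [mul_assoc (HS y σ c w r), ← mul_assoc, D.psiHS r w hr, mul_assoc (HS y σ c w r),
        mul_assoc (HS y σ c w r), mul_assoc (HS y σ c w r), mul_assoc (HS y σ c w r),
        mul_assoc (HS y σ c w r)]
      congr 1
      by_cases hw : w r = w (r+1)
      · rw [hw]; exact D.phi2 r w hr hw σ c _
      · have b1 := phi1 ψ E r w (D.ne2 r w hr hw) (D.yE _ _) σ c (w r)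
        have b2 := phi1 ψ E r w (D.ne1 r w hr hw) (D.yE _ _) σ c (w (r+1))
        have b3 : Commute (phi σ c (w (r+1)) (y (r+1))) (C (E w)) :=
          (comm_phi (comm_CC (D.yE _ w).symm) _ _ _).symm
        have b4 : Commute (phi σ c (w r) (y (r+1))) (phi σ c (w (r+1)) (y r)) :=
          comm_phi (comm_phi (comm_CC (D.yy _ _)) _ _ _).symm _ _ _
        rw [← b4.eq, mul_assoc, mul_assoc, mul_assoc, mul_assoc, b3.eq, ← mul_assoc (phi σ c (w r) (y r)),
          ← mul_assoc (C (ψ r)), ← mul_assoc (C (ψ r)), b1, mul_assoc, mul_assoc, ← b3.eq,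
          ← mul_assoc (C (ψ r)), b2]
        simp only [mul_assoc]
    · simp only [HS]
      have b3 : Commute (phi σ c (w m) (y m)) (C (E w)) :=
          (comm_phi (comm_CC (D.yE _ w).symm) _ _ _).symm
      have b4 : Commute (C (ψ r)) (phi σ c (w m) (y m)) :=
          (comm_phi (comm_CC (D.far r m hr (by omega) (by omega))) _ _ _)
      rw [swW_o r m w (by omega) h, ← mul_assoc, mul_assoc, b3.eq, ← mul_assoc, ih (by omega),
        mul_assoc, ← b3.eq, mul_assoc, ← mul_assoc (C (ψ r)), b4.eq]
      simp only [mul_assoc]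

theorem coeff_inter {p q : R} {F F' : PowerSeries R} (h : C p * F * C q = F' * C p * C q) (k : ℕ) :
    p * (coeff k F * q) = coeff k F' * (p * q) := by
  have := congrArg (coeff k) h
  rw [coeff_mul_C', coeff_mul_C', coeff_mul_C', coeff_C_mul'] at this
  simpa only [mul_assoc] using this

theorem KD.interc (D : KD e n y ψ E lam) (r : ℕ) (w : ℕ → ZMod e) (hr : r + 1 < n)
    (σ c : ZMod e) (m : ℕ) (hm : r + 1 < m) (k : ℕ) :
    ψ r * (coeff k (HS y σ c w m) * E w)
      = coeff k (HS y σ c (swW r w) m) * E (swW r w) * ψ r := by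
  rw [coeff_inter (D.inter r w hr σ c m hm) k, D.psiE r w hr, mul_assoc]

end main

section chain
open PowerSeries
variable {R : Type*} [Ring R] {e n : ℕ} {y ψ : ℕ → R} {E : (ℕ → ZMod e) → R} {lam : ZMod e → ℕ}

theorem sig_ne {σ : ZMod e} (hσ : σ = 1 ∨ σ = -1) (j : ℕ) (h0 : 0 < j) (h1 : j < e) :
    (j : ZMod e) * σ ≠ 0 := by
  have : (j : ZMod e) ≠ 0 := by
    rw [Ne, ZMod.natCast_eq_zero_iff]
    exact fun h => absurd (Nat.le_of_dvd h0 h) (by omega)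
  rcases hσ with rfl | rfl
  · simpa using this
  · simpa using this

theorem nbr_iff {σ : ZMod e} (hσ : σ = 1 ∨ σ = -1) (a b : ZMod e) :
    (b = a + 1 ∨ a = b + 1) ↔ (b = a + σ ∨ b = a - σ) := by
  have : a = b + 1 ↔ b = a - 1 := by
    constructor
    · rintro rfl; ring
    · rintro rfl; ring
  rw [this]
  rcases hσ with rfl | rfl
  · rfl
  · rw [sub_neg_eq_add, ← sub_eq_add_neg]; exact or_comm

theorem KD.z_none (D : KD e n y ψ E lam) {r : ℕ} {w : ℕ → ZMod e} (hr : r + 1 < n)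
    (h1 : w r ≠ w (r+1)) (h2 : ¬ (w (r+1) = w r + 1 ∨ w r = w (r+1) + 1)) {Y : R}
    (hY : Commute (E w) Y) (h : ψ r * (Y * E w) = 0) : Y * E w = 0 := by
  push Not at h2
  have := D.qNone r w hr h1 h2.1 h2.2
  rw [← hY.eq] at h ⊢
  rw [← this, mul_assoc, mul_assoc, h, mul_zero]

theorem KD.z_nbr (D : KD e n y ψ E lam) {r : ℕ} {w : ℕ → ZMod e} (hr : r + 1 < n)
    (h2 : w (r+1) = w r + 1 ∨ w r = w (r+1) + 1) {Y : R}
    (hY : Commute (E w) Y) (h : ψ r * (Y * E w) = 0) : (y (r+1) - y r) * (Y * E w) = 0 := by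
  have := D.qNbr r w hr h2
  rw [← hY.eq] at h ⊢
  rw [← mul_assoc]
  rcases this with h' | h' <;> rw [h'] <;> simp [mul_assoc, h]

theorem KD.z_braid (D : KD e n y ψ E lam) {r : ℕ} {w : ℕ → ZMod e} (hr : r + 2 < n)
    (h1 : w (r+2) = w r) (h2 : w (r+1) = w r + 1 ∨ w r = w (r+1) + 1) {Y : R}
    (hY : Commute (E w) Y) (h : ψ r * (Y * E w) = 0) (h' : ψ (r+1) * (Y * E w) = 0) :
    Y * E w = 0 := by
  have := D.braid r w hr h1 h2
  rw [← hY.eq] at h h' ⊢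
  rcases this with h3 | h3 <;> rw [h3] <;> simp [mul_assoc, sub_mul, h, h']

theorem KD.psi_pow (D : KD e n y ψ E lam) {r : ℕ} {w : ℕ → ZMod e} (hr : r + 1 < n)
    (h1 : w r ≠ w (r+1)) (k : ℕ) :
    ψ r * (y (r+1) ^ k * E w) = y r ^ k * E (swW r w) * ψ r := by
  have : ψ r * (y (r+1) ^ k * E w) = y r ^ k * (ψ r * E w) := by
    induction k with
    | zero => simp
    | succ k ih =>
      have a := D.ne1 r w hr h1
      have b := (D.yE (r+1) w).eq
      rw [pow_succ, mul_assoc, b, ← mul_assoc (y (r+1)^k), ← mul_assoc (ψ r), ih, mul_assoc,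
        mul_assoc, ← b, ← mul_assoc (ψ r), a, pow_succ]
      simp only [mul_assoc]
  rw [this, D.psiE r w hr, mul_assoc]

/-- free move lemma -/
theorem KD.free (D : KD e n y ψ E lam) (c : ZMod e) (m : ℕ) : ∀ (w : ℕ → ZMod e), m < n →
    w m = c → (∀ j < m, w j ≠ c ∧ ¬ (c = w j + 1 ∨ w j = c + 1)) → y m ^ lam c * E w = 0 := by
  induction m with
  | zero =>
    intro w hn hw _
    have := D.cyc w hn
    rwa [hw] at this
  | succ s ih =>
    intro w hn hw h
    have hs := h s (by omega)
    refine D.z_none (r := s) hn (by rw [hw]; exact hs.1) (by rw [hw]; exact hs.2)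
      ((D.yE (s+1) w).symm.pow_right _) ?_
    rw [D.psi_pow hn (by rw [hw]; exact hs.1), ih (swW s w) (by omega) (by rw [swW_l, hw]),
      zero_mul]
    intro j hj
    rw [swW_o s j w (by omega) (by omega)]
    exact h j (by omega)

/-- the main vanishing statement -/
def SS (n : ℕ) (y : ℕ → R) (E : (ℕ → ZMod e) → R) (σ t : ZMod e) (p : ZMod e → ℕ) (m : ℕ) : Prop :=
  ∀ w : ℕ → ZMod e, (∀ j < n, w j ≠ t) → ∀ c k,
    p c + dW w (c + σ) m < k + dW w c m → coeff k (HS y σ c w m) * E w = 0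

/-- admissible words in the equality case -/
def Good (n : ℕ) (σ t c : ZMod e) (pc k m : ℕ) (w : ℕ → ZMod e) : Prop :=
  (∀ j < n, w j ≠ t) ∧ k + dW w c m = pc + dW w (c + σ) m ∧ w m = c

theorem avoid_sw {t : ZMod e} {w : ℕ → ZMod e} (h : ∀ j < n, w j ≠ t) {r : ℕ} (hr : r + 1 < n) :
    ∀ j < n, swW r w j ≠ t := by
  intro j hj
  by_cases h1 : j = r
  · subst h1; rw [swW_l]; exact h _ hr
  by_cases h2 : j = r + 1
  · subst h2; rw [swW_r]; exact h _ (by omega)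
  rw [swW_o r j w h1 h2]; exact h j hj

theorem Good.sw {σ t c : ZMod e} {pc k m : ℕ} {w : ℕ → ZMod e} (h : Good n σ t c pc k m w)
    {r : ℕ} (hr : r + 1 < m) (hm : m < n) : Good n σ t c pc k m (swW r w) := by
  obtain ⟨h1, h2, h3⟩ := h
  refine ⟨avoid_sw h1 (by omega), ?_, ?_⟩
  · rw [dW_sw r w _ m hr, dW_sw r w _ m hr, h2]
  · rw [swW_o r m w (by omega) (by omega), h3]

theorem KD.q0 (D : KD e n y ψ E lam) (hne : n < e) {σ t c : ZMod e} (hσ : σ = 1 ∨ σ = -1)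
    {p : ZMod e → ℕ} {s k : ℕ} (hs : s + 1 < n) (S0 : SS n y E σ t p s) (S1 : SS n y E σ t p (s+1))
    {w : ℕ → ZMod e} (hg : Good n σ t c (p c) k (s+1) w) :
    (w s ≠ c - σ → coeff k (HS y σ c w (s+2)) * E w = 0) ∧
    (w s = c - σ → (y (s+1) - y s) * (coeff k (HS y σ c w (s+2)) * E w) = 0) := by
  obtain ⟨hav, hd, hc⟩ := hg
  have sg1 : σ ≠ 0 := by have := sig_ne hσ 1 (by omega) (by omega); simpa using this
  have sg2 : σ + σ ≠ 0 := by
    have := sig_ne hσ 2 (by omega) (by omega)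
    simpa [two_mul] using this
  have hcs : c + σ ≠ c := by simpa using sg1
  have hav' := avoid_sw hav hs
  have cEY := D.cE σ c w w (s+2) k
  have far : w s ≠ c → w s ≠ c + σ → ψ s * (coeff k (HS y σ c w (s+2)) * E w) = 0 := by
    intro h1 h2
    rw [D.interc s w hs σ c (s+2) (by omega) k]
    have : HS y σ c (swW s w) (s+2) = HS y σ c (swW s w) (s+1) := by
      conv_lhs => rw [HS]
      rw [swW_r, phi, if_neg h1, if_neg h2, mul_one]
    rw [this, S1 _ hav' c k, zero_mul]
    simp only [dW] at hd ⊢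
    rw [dW_sw_lo s w _ s le_rfl, dW_sw_lo s w _ s le_rfl, swW_l, hc, if_pos rfl, if_neg (Ne.symm hcs)]
    rw [if_neg h1, if_neg h2] at hd
    omega
  constructor
  · intro hb
    by_cases h1 : w s = c
    · -- equal letters
      simp only [dW] at hd
      rw [if_pos h1, if_neg (by rw [h1]; exact Ne.symm hcs)] at hd
      have hww : w s = w (s+1) := by rw [h1, hc]
      have hG : coeff (k+1) (HS y σ c w (s+1)) * E w = 0 := by
        apply S1 w hav c
        simp only [dW]
        rw [if_pos h1, if_neg (by rw [h1]; exact Ne.symm hcs)]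
        omega
      have hH1 : HS y σ c w (s+1) = HS y σ c w s * geo (y s) := by
        conv_lhs => rw [HS]
        rw [phi, if_pos h1]
      have hH2 : HS y σ c w (s+2) = HS y σ c w s * geo (y s) * geo (y (s+1)) := by
        conv_lhs => rw [HS, HS]
        rw [phi, if_pos h1, phi, if_pos hc]
      have cg : Commute (geo (y (s+1))) (C (E w)) := (comm_geo (comm_CC (D.yE (s+1) w).symm)).symm
      have key : C (ψ s) * geo (y (s+1)) * C (E w)
          = geo (y s) * C (ψ s) * C (E w) + X * (geo (y s) * geo (y (s+1)) * C (E w)) := by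
        have a1 := D.eq1 s w hs hww
        have a2 : C (ψ s) * C (y (s+1)) * C (E w)
            = (C (y s) * C (ψ s) * C (E w) + C (E w) : PowerSeries R) := by
          simp only [← map_mul, ← map_add, a1]
        have a3 : C (ψ s) * lin (y (s+1)) * C (E w) = lin (y s) * C (ψ s) * C (E w) - X * C (E w) := by
          unfold lin
          have e1 : (C (y s) * X : PowerSeries R) = X * C (y s) := (comm_X _).eq
          have e2 : (C (y (s+1)) * X : PowerSeries R) = X * C (y (s+1)) := (comm_X _).eq
          have e3 : (C (ψ s) * X : PowerSeries R) = X * C (ψ s) := (comm_X _).eq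
          have e4 : ∀ z : PowerSeries R, C (ψ s) * (X * z) = X * (C (ψ s) * z) := fun z => by
            rw [← mul_assoc, e3, mul_assoc]
          rw [e1, e2]
          simp only [mul_sub, sub_mul, mul_one, one_mul, mul_assoc, e4] at a2 ⊢
          rw [a2, mul_add]; abel
        have a4 : geo (y s) * (C (ψ s) * lin (y (s+1)) * C (E w)) * geo (y (s+1))
            = geo (y s) * C (ψ s) * C (E w) := by
          rw [mul_assoc, mul_assoc (C (ψ s) * _), ← cg.eq, ← mul_assoc (C (ψ s) * _),
            mul_assoc (C (ψ s)), lin_geo, mul_one, mul_assoc]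
        rw [← a4, a3, mul_sub, sub_mul]
        have a5 : geo (y s) * (lin (y s) * C (ψ s) * C (E w)) * geo (y (s+1))
            = C (ψ s) * geo (y (s+1)) * C (E w) := by
          rw [mul_assoc (C (ψ s)), cg.eq]
          simp only [← mul_assoc]; rw [geo_lin, one_mul]
        have a6 : geo (y s) * (X * C (E w)) * geo (y (s+1))
            = X * (geo (y s) * geo (y (s+1)) * C (E w)) := by
          rw [mul_assoc _ _ (C (E w)), cg.eq, ← mul_assoc, (comm_X (geo (y s))).eq]
          simp only [mul_assoc]
        rw [a5, a6]; abel
      have key2 : C (ψ s) * (HS y σ c w s * geo (y (s+1))) * C (E w)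
          = HS y σ c w (s+1) * C (ψ s) * C (E w) + X * (HS y σ c w (s+2) * C (E w)) := by
        rw [← mul_assoc, D.psiHS s w hs, hH1, hH2, mul_assoc, mul_assoc, ← mul_assoc (C (ψ s)), key,
          mul_add, ← mul_assoc _ X, (comm_X (HS y σ c w s)).eq]
        simp only [mul_assoc]
      set g := coeff (k+1) (HS y σ c w s * geo (y (s+1))) with hgdef
      set Y := coeff k (HS y σ c w (s+2)) with hYdef
      have hYg : Y * E w = ψ s * (g * E w) := by
        have := congrArg (coeff (k+1)) key2
        rw [map_add, coeff_succ_X_mul, coeff_mul_C', coeff_mul_C', coeff_mul_C', coeff_mul_C',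
          coeff_C_mul', mul_assoc (coeff (k+1) (HS y σ c w (s+1))), D.psiE s w hs, swW_eq s w hww,
          ← mul_assoc, hG, zero_mul, zero_add] at this
        rw [← mul_assoc]; exact this.symm
      have cEg : Commute (E w) g := by
        refine comm_coeff ?_ _
        exact (comm_HS _ _ _ _ (fun i _ => comm_CC (D.yE i w).symm)).mul_right cg.symm
      have h2 : ψ s * (Y * E w) = 0 := by
        rw [hYg, ← cEg.eq]
        have := D.qEq s w hs hww
        rw [← mul_assoc, ← mul_assoc]
        rw [this, zero_mul]
      have h3 := D.eq2 s w hs hww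
      have h4 : (y (s+1) * ψ s * E w) * Y = (ψ s * y s * E w + E w) * Y := by rw [h3]
      have h5 : ψ s * y s * E w * Y = 0 := by
        have c1 := D.cy σ c w (s+2) k s
        have c2 := D.yE s w
        rw [mul_assoc, mul_assoc, cEY.eq, ← mul_assoc (y s), c1.eq, mul_assoc, c2.eq, ← mul_assoc Y,
          ← mul_assoc, h2, zero_mul]
      rw [add_mul, h5, zero_add, mul_assoc, mul_assoc, cEY.eq, h2, mul_zero] at h4
      exact h4.symm
    by_cases h2 : w s = c + σ
    · simp only [dW] at hd
      rw [if_neg h1, if_pos h2] at hd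
      have hH2 : HS y σ c w (s+2)
          = HS y σ c w s + X * (C (y (s+1) - y s) * (HS y σ c w s * geo (y (s+1)))) := by
        conv_lhs => rw [HS, HS]
        rw [phi, if_neg h1, if_pos h2, phi, if_pos hc, mul_assoc]
        have : lin (y s) = lin (y (s+1)) + C (y (s+1) - y s) * X := by
          unfold lin; rw [map_sub, sub_mul]; abel
        have cc : Commute (HS y σ c w s) (C (y (s+1) - y s)) := by
          rw [map_sub]
          exact (comm_HS _ _ _ _ (fun i _ => (comm_CC (D.yy (s+1) i)).sub_left
            (comm_CC (D.yy s i)))).symm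
        rw [this, add_mul, lin_geo, mul_add, mul_one, (comm_X _).eq]
        congr 1
        rw [mul_assoc, ← mul_assoc _ X, (comm_X _).eq, mul_assoc, ← mul_assoc (HS y σ c w s), cc.eq]
        simp only [mul_assoc]
      cases k with
      | zero =>
        rw [hH2, map_add]
        have : coeff 0 (X * (C (y (s+1) - y s) * (HS y σ c w s * geo (y (s+1))))) = 0 := by simp
        rw [this, add_zero]
        apply S0 w hav
        omega
      | succ k =>
        rw [hH2, map_add, coeff_succ_X_mul, coeff_C_mul', add_mul, S0 w hav c (k+1) (by omega),
          zero_add]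
        have cg : Commute (geo (y (s+1))) (C (E w)) :=
          (comm_geo (comm_CC (D.yE (s+1) w).symm)).symm
        have cEg : Commute (E w) (coeff k (HS y σ c w s * geo (y (s+1)))) := by
          refine comm_coeff ?_ _
          exact (comm_HS _ _ _ _ (fun i _ => comm_CC (D.yE i w).symm)).mul_right cg.symm
        rw [mul_assoc]
        refine D.z_nbr hs ?_ cEg ?_
        · rw [hc, h2]
          exact (nbr_iff hσ (c+σ) c).2 (Or.inr (by ring))
        · have e1 : C (ψ s) * (HS y σ c w s * geo (y (s+1))) * C (E w)
              = HS y σ c (swW s w) (s+1) * C (ψ s) * C (E w) := by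
            have := phi1 ψ E s w (D.ne1 s w hs (by rw [h2, hc]; exact hcs)) (D.yE _ _) σ c c
            rw [phi, phi, if_pos rfl, if_pos rfl] at this
            conv_rhs => rw [HS]
            rw [HS_sw_lo y σ c s w s le_rfl, swW_l, hc, phi, if_pos rfl, ← mul_assoc,
              D.psiHS s w hs, mul_assoc, mul_assoc, ← mul_assoc (C (ψ s)), this]
            simp only [mul_assoc]
          rw [coeff_inter e1, D.psiE s w hs, ← mul_assoc, S1 _ hav' c k, zero_mul]
          simp only [dW]
          rw [dW_sw_lo s w _ s le_rfl, dW_sw_lo s w _ s le_rfl, swW_l, hc, if_pos rfl,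
            if_neg (Ne.symm hcs)]
          omega
    · refine D.z_none hs (by rw [hc]; exact h1) ?_ cEY (far h1 h2)
      rw [hc, or_comm, nbr_iff hσ]
      tauto
  · intro hb
    have h1 : w s ≠ c := by rw [hb]; simpa using sg1
    have h2 : w s ≠ c + σ := by
      rw [hb]; intro h
      apply sg2
      have : c + σ - (c - σ) = 0 := by rw [h]; ring
      linear_combination this
    refine D.z_nbr hs ?_ cEY (far h1 h2)
    rw [hc, or_comm, nbr_iff hσ]
    exact Or.inr hb

end chain

section chain2
open PowerSeries
variable {R : Type*} [Ring R] {e n : ℕ} {y ψ : ℕ → R} {E : (ℕ → ZMod e) → R} {lam : ZMod e → ℕ}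

/-- the word ends in c - qσ, ..., c - σ before position m -/
def Ends (σ c : ZMod e) (m q : ℕ) (w : ℕ → ZMod e) : Prop :=
  ∀ j, 1 ≤ j → j ≤ q → w (m - j) = c - j * σ

theorem KD.chain (D : KD e n y ψ E lam) (hne : n < e) {σ t c : ZMod e} (hσ : σ = 1 ∨ σ = -1)
    {p : ZMod e → ℕ} {s k m : ℕ} (hms : m = s + 1) (hm : m < n) (S0 : SS n y E σ t p s)
    (S1 : SS n y E σ t p m) (q : ℕ) (hq1 : 1 ≤ q) : q ≤ m →
    ∀ w : ℕ → ZMod e, Good n σ t c (p c) k m w →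
    (¬ Ends σ c m q w → coeff k (HS y σ c w (m+1)) * E w = 0) ∧
    (Ends σ c m q w → (y m - y (m - q)) * (coeff k (HS y σ c w (m+1)) * E w) = 0) := by
  have sg1 : σ ≠ 0 := by have := sig_ne hσ 1 (by omega) (by omega); simpa using this
  have hcs : c + σ ≠ c := by simpa using sg1
  induction q, hq1 using Nat.le_induction with
  | base =>
    intro _ w hg
    subst hms
    have := D.q0 hne hσ hm S0 S1 hg
    have hE : Ends σ c (s+1) 1 w ↔ w s = c - σ := by
      constructor
      · intro h; simpa using h 1 le_rfl le_rfl
      · intro h j h1 h2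
        obtain rfl : j = 1 := by omega
        simpa using h
    rw [hE]
    exact this
  | succ q hq ih =>
    intro hqm w hg
    have ih' := ih (by omega)
    obtain ⟨r, hr⟩ : ∃ r, m = r + q + 1 := ⟨m - q - 1, by omega⟩
    have hmq : m - q = r + 1 := by omega
    have hmq1 : m - (q+1) = r := by omega
    have hrn : r + 1 < n := by omega
    have cEY := D.cE σ c w w (m+1) k
    set Y := coeff k (HS y σ c w (m+1)) with hY
    by_cases hE : Ends σ c m q w
    swap
    · have hZ := (ih' w hg).1 hE
      exact ⟨fun _ => hZ, fun _ => by rw [hZ, mul_zero]⟩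
    have hEq := (ih' w hg).2 hE
    rw [← hY] at hEq
    have hw1 : w (r+1) = c - q * σ := by rw [← hmq]; exact hE q hq le_rfl
    have hqs : (q : ZMod e) * σ ≠ 0 := sig_ne hσ q (by omega) (by omega)
    have dead : ∀ (i : ℕ), i + 1 < n → i + 1 < m → ¬ Ends σ c m q (swW i w) → ψ i * (Y * E w) = 0 := by
      intro i hi him hnE
      rw [hY, D.interc i w hi σ c (m+1) (by omega) k,
        (ih' (swW i w) (hg.sw him hm)).1 hnE, zero_mul]
    have dead1 : w r ≠ c - q * σ → ψ r * (Y * E w) = 0 := by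
      intro h
      refine dead r hrn (by omega) fun hE' => h ?_
      have := hE' q hq le_rfl
      rwa [hmq, swW_r] at this
    by_cases hb : w r = c - (q+1 : ℕ) * σ
    · have hE1 : Ends σ c m (q+1) w := by
        intro j h1 h2
        by_cases hj : j = q + 1
        · subst hj; rw [hmq1]; exact hb
        · exact hE j h1 (by omega)
      refine ⟨fun h => absurd hE1 h, fun _ => ?_⟩
      have h1 : w r ≠ c - q * σ := by
        rw [hb]; intro h
        apply sg1
        push_cast at h
        linear_combination -h
      have h2 := D.z_nbr hrn (w := w) (Y := Y) (by
        rw [nbr_iff hσ, hw1, hb]; left; push_cast; ring) cEY (dead1 h1)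
      rw [hmq] at hEq
      rw [hmq1]
      have h3 : y m - y r = (y m - y (r+1)) + (y (r+1) - y r) := by abel
      rw [h3, add_mul, hEq, h2, add_zero]
    · suffices hZ : Y * E w = 0 from ⟨fun _ => hZ, fun _ => by rw [hZ, mul_zero]⟩
      by_cases hb1 : w r = c - q * σ
      · -- equal letters
        have hww : w r = w (r+1) := by rw [hb1, hw1]
        have hcomm : ψ r * (Y * E w) = Y * E w * ψ r := by
          rw [hY, D.interc r w hrn σ c (m+1) (by omega) k, swW_eq r w hww]
        set Z0 := Y * E w with hZ0
        have hyZ : ∀ j, y j * Z0 = Z0 * y j := fun j =>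
          ((D.cy σ c w (m+1) k j).mul_right (D.yE j w)).eq
        have hEZ : E w * Y = Z0 := cEY.eq
        rw [hmq, sub_mul, sub_eq_zero] at hEq
        have b1 : y (r+1) * (ψ r * Z0) = ψ r * (y r * Z0) + Z0 := by
          have := congrArg (· * Y) (D.eq2 r w hrn hww)
          simp only [add_mul, mul_assoc, hEZ] at this
          exact this
        have b2 : ψ r * (y (r+1) * Z0) = y (r+1) * (ψ r * Z0) := by
          rw [← hEq, ← mul_assoc, (D.far r m hrn (by omega) (by omega)).eq, mul_assoc, hcomm,
            ← mul_assoc (y m) Z0, hEq, mul_assoc]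
        have b3 : Z0 = ψ r * ((y (r+1) - y r) * Z0) := by
          rw [sub_mul, mul_sub, b2, b1]; abel
        have b4 : ψ r * (ψ r * Z0) = 0 := by
          have := congrArg (· * Y) (D.qEq r w hrn hww)
          simp only [mul_assoc, hEZ, zero_mul] at this
          exact this
        have b5 : ψ r * Z0 = 0 := by
          have c1 : (y (r+1) - y r) * Z0 = Z0 * (y (r+1) - y r) := by
            rw [sub_mul, mul_sub, hyZ, hyZ]
          rw [b3, c1, ← mul_assoc (ψ r) Z0, ← mul_assoc (ψ r), b4, zero_mul]
        have c1 : (y (r+1) - y r) * Z0 = Z0 * (y (r+1) - y r) := by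
            rw [sub_mul, mul_sub, hyZ, hyZ]
        rw [b3, c1, ← mul_assoc, b5, zero_mul]
      have hd := dead1 hb1
      by_cases hb2 : w r = c - q * σ + σ
      · -- braid case
        obtain ⟨u, rfl⟩ : ∃ u, q = u + 1 := ⟨q - 1, by omega⟩
        have hb2' : w r = c - u * σ := by rw [hb2]; push_cast; ring
        have hw2 : w (r+2) = c - u * σ := by
          by_cases hu : u = 0
          · subst hu
            have : r + 2 = m := by omega
            rw [this, hg.2.2]; simp
          · have := hE u (by omega) (by omega)
            rwa [show m - u = r + 2 by omega] at this
        refine D.z_braid (r := r) (by omega) (by rw [hw2, hb2']) ?_ cEY hd ?_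
        · rw [nbr_iff hσ, hw1, hb2]; right; ring
        · by_cases hu : u = 0
          · subst hu
            have hm2 : m = r + 2 := by omega
            have hwr : w r = c := by rw [hb2']; simp
            have hwr1 : w (r+1) = c - σ := by rw [hw1]; simp
            have hwr2 : w (r+2) = c := by rw [hw2]; simp
            have sg2 : σ + σ ≠ 0 := by
              have := sig_ne hσ 2 (by omega) (by omega)
              simpa [two_mul] using this
            have n1 : c - σ ≠ c := by simpa using sg1
            have n2 : c - σ ≠ c + σ := by
              intro h
              apply sg2
              linear_combination -h
            have hh : HS y σ c (swW (r+1) w) (m+1) = HS y σ c (swW (r+1) w) m := by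
              conv_lhs => rw [HS]
              rw [hm2, show r + 2 = (r+1)+1 from rfl, swW_r, hwr1, phi, if_neg n1, if_neg n2, mul_one]
            rw [hY, D.interc (r+1) w (by omega) σ c (m+1) (by omega) k, hh,
              S1 _ (avoid_sw hg.1 (by omega)) c k, zero_mul]
            have hgd := hg.2.1
            rw [hm2] at hgd ⊢
            simp only [dW] at hgd ⊢
            rw [dW_sw_lo (r+1) w _ r (by omega), dW_sw_lo (r+1) w _ r (by omega),
              swW_o (r+1) r w (by omega) (by omega), swW_l, hwr, show r + 1 + 1 = r + 2 from rfl,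
              hwr2, if_pos rfl, if_neg (Ne.symm hcs)]
            rw [hwr, hwr1, if_pos rfl, if_neg (Ne.symm hcs), if_neg n1, if_neg n2] at hgd
            omega
          · refine dead (r+1) (by omega) (by omega) fun hE' => ?_
            have := hE' (u+1) (by omega) le_rfl
            rw [show m - (u+1) = r+1 by omega, swW_l, show r + 1 + 1 = r + 2 from rfl, hw2] at this
            apply sg1
            push_cast at this
            linear_combination this
      · refine D.z_none hrn (by rw [hw1]; exact hb1) ?_ cEY hd
        rw [hw1, or_comm, nbr_iff hσ]
        rintro (h | h)
        · exact hb2 h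
        · apply hb; rw [h]; push_cast; ring

/-- the pure string -/
theorem KD.fin (D : KD e n y ψ E lam) (hne : n < e) {σ t c : ZMod e} (hσ : σ = 1 ∨ σ = -1)
    {p : ZMod e → ℕ} (hp : ∀ x, x ≠ t → x - σ ≠ t → p (x - σ) + lam x ≤ p x)
    {s k : ℕ} (hm : s + 1 < n) (S1 : SS n y E σ t p (s+1))
    {w : ℕ → ZMod e} (hg : Good n σ t c (p c) k (s+1) w) (hE : Ends σ c (s+1) (s+1) w) :
    coeff k (HS y σ c w (s+2)) * E w = 0 := by
  obtain ⟨hav, hd, hc⟩ := hg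
  have sg1 : σ ≠ 0 := by have := sig_ne hσ 1 (by omega) (by omega); simpa using this
  have hcs : c + σ ≠ c := by simpa using sg1
  have hw : ∀ i, i ≤ s → w i = c - (s + 1 - i : ℕ) * σ := by
    intro i hi
    have := hE (s+1-i) (by omega) (by omega)
    rwa [show s + 1 - (s+1-i) = i by omega] at this
  have f1 : ∀ i, i ≤ s → w i ≠ c := by
    intro i hi h
    rw [hw i hi] at h
    exact sig_ne hσ (s+1-i) (by omega) (by omega) (by linear_combination -h)
  have f2 : ∀ i, i ≤ s → w i ≠ c + σ := by
    intro i hi h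
    rw [hw i hi] at h
    refine sig_ne hσ (s+1-i+1) (by omega) (by omega) ?_
    push_cast
    linear_combination -h
  have f3 : ∀ i, i < s → w i ≠ c - σ := by
    intro i hi h
    rw [hw i hi.le] at h
    refine sig_ne hσ (s-i) (by omega) (by omega) ?_
    rw [show s + 1 - i = (s - i) + 1 by omega] at h
    push_cast at h
    linear_combination -h
  have hws : w s = c - σ := by
    have := hw s le_rfl
    simpa using this
  have hk : k = p c := by
    rw [dW_zero _ _ _ (fun j hj => f1 j (by omega)), dW_zero _ _ _ (fun j hj => f2 j (by omega))] at hd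
    simpa using hd
  have hH : HS y σ c w (s+2) = geo (y (s+1)) := by
    conv_lhs => rw [HS]
    rw [HS_one _ _ _ _ _ (fun j hj => ⟨f1 j (by omega), f2 j (by omega)⟩), hc, phi, if_pos rfl, one_mul]
  rw [hH, geo, coeff_mk]
  have g1 : y s ^ p (c - σ) * E w = 0 := by
    have := S1 w hav (c - σ) (p (c - σ)) (by
      simp only [dW]
      rw [sub_add_cancel, dW_zero _ _ _ (fun j hj => f1 j (by omega)), if_neg (f1 s le_rfl), hws,
        if_pos rfl]
      omega)
    have hH : HS y σ (c - σ) w (s+1) = geo (y s) := by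
      conv_lhs => rw [HS]
      rw [HS_one _ _ _ _ _ (fun j hj => ⟨f3 j (by omega), by rw [sub_add_cancel]; exact f1 j (by omega)⟩),
        hws, phi, if_pos rfl, one_mul]
    rwa [hH, geo, coeff_mk] at this
  have hne' : w s ≠ w (s+1) := by rw [hc]; exact f1 s le_rfl
  have g2 : (y (s+1) - y s) * (y (s+1) ^ lam c * E w) = 0 := by
    refine D.z_nbr hm ?_ ((D.yE (s+1) w).symm.pow_right _) ?_
    · rw [hc, or_comm, nbr_iff hσ]; right; exact hws
    · rw [D.psi_pow hm hne', D.free c s (swW s w) (by omega) (by rw [swW_l, hc]), zero_mul]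
      intro j hj
      rw [swW_o s j w (by omega) (by omega)]
      refine ⟨f1 j hj.le, ?_⟩
      rw [or_comm, nbr_iff hσ]
      rintro (h | h)
      · exact f2 j hj.le h
      · exact f3 j hj h
  have g3 : ∀ i, y (s+1) ^ i * (y (s+1) ^ lam c * E w) = y s ^ i * (y (s+1) ^ lam c * E w) := by
    intro i
    induction i with
    | zero => simp
    | succ i ih =>
      rw [sub_mul, sub_eq_zero] at g2
      rw [pow_succ, mul_assoc, g2, ← mul_assoc, ((D.yy (s+1) s).pow_left i).eq, mul_assoc, ih,
        ← mul_assoc, pow_succ']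
  have hle := hp c (by rw [← hc]; exact hav _ hm) (by rw [← hws]; exact hav _ (by omega))
  have g4 : y (s+1) ^ (p (c - σ) + lam c) * E w = 0 := by
    rw [pow_add, mul_assoc, g3, ← mul_assoc, ((D.yy s (s+1)).pow_pow _ _).eq, mul_assoc, g1, mul_zero]
  rw [hk, show p c = (p c - (p (c - σ) + lam c)) + (p (c - σ) + lam c) by omega, pow_add, mul_assoc, g4,
    mul_zero]

theorem KD.main (D : KD e n y ψ E lam) (hne : n < e) {σ t : ZMod e} (hσ : σ = 1 ∨ σ = -1)
    {p : ZMod e → ℕ} (hp0 : ∀ x, x ≠ t → lam x ≤ p x)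
    (hp : ∀ x, x ≠ t → x - σ ≠ t → p (x - σ) + lam x ≤ p x)
    (m : ℕ) (hm : m ≤ n) : SS n y E σ t p m := by
  induction m using Nat.strong_induction_on with
  | _ m ih =>
  rcases m with _ | m
  · intro w hav c k hk
    simp only [dW, add_zero] at hk
    simp [HS, coeff_one, show k ≠ 0 by omega]
  · intro w hav c k hk
    have Sm := ih m (by omega) (by omega)
    by_cases hc : w m = c
    · -- equality case first
      have eqc : ∀ k, k + dW w c m = p c + dW w (c+σ) m → coeff k (HS y σ c w (m+1)) * E w = 0 := by
        intro k hk
        have hg : Good n σ t c (p c) k m w := ⟨hav, hk, hc⟩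
        rcases m with _ | s
        · simp only [dW, add_zero] at hk
          simp only [HS]
          rw [hc, phi, if_pos rfl, one_mul, geo, coeff_mk]
          have h1 := D.cyc w (by omega)
          rw [hc] at h1
          have h2 := hp0 c (by rw [← hc]; exact hav 0 (by omega))
          rw [hk, show p c = (p c - lam c) + lam c by omega, pow_add, mul_assoc, h1, mul_zero]
        · by_cases hE : Ends σ c (s+1) (s+1) w
          · exact D.fin hne hσ hp (by omega) Sm hg hE
          · exact (D.chain hne hσ rfl (by omega) (ih s (by omega) (by omega)) Sm (s+1) (by omega) le_rfl
              w hg).1 hE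
      have hcc : c + σ ≠ c ∨ e = 1 := by
        by_cases h : e = 1
        · exact Or.inr h
        · left
          have := sig_ne hσ 1 (by omega) (by omega)
          simpa using this
      have hcs : c + σ ≠ c := by rcases hcc with h | h; exact h; omega
      simp only [dW] at hk
      rw [if_pos hc, if_neg (by rw [hc]; exact Ne.symm hcs)] at hk
      -- recursion in k
      have hrec : ∀ k, coeff (k+1) (HS y σ c w (m+1))
          = coeff (k+1) (HS y σ c w m) + y m * coeff k (HS y σ c w (m+1)) := by
        intro k
        have h1 : HS y σ c w (m+1) = HS y σ c w m + C (y m) * HS y σ c w (m+1) * X := by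
          have h2 : HS y σ c w (m+1) = HS y σ c w m * geo (y m) := by
            conv_lhs => rw [HS]
            rw [hc, phi, if_pos rfl]
          have cc : Commute (C (y m)) (HS y σ c w (m+1)) :=
            comm_HS _ _ _ _ (fun i _ => comm_CC (D.yy m i))
          have h3 : HS y σ c w (m+1) * lin (y m) = HS y σ c w m := by
            rw [h2, mul_assoc, geo_lin, mul_one]
          rw [cc.eq]
          conv_rhs => rw [← h3]
          unfold lin
          rw [mul_sub, mul_one, mul_assoc]; abel
        conv_lhs => rw [h1]
        rw [map_add, coeff_succ_mul_X, coeff_C_mul']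
      have main : ∀ i k, k + dW w c m = p c + dW w (c+σ) m + i →
          coeff k (HS y σ c w (m+1)) * E w = 0 := by
        intro i
        induction i with
        | zero => intro k hk; exact eqc k (by omega)
        | succ i ihi =>
          intro k hk
          rcases k with _ | k
          · have : coeff 0 (HS y σ c w (m+1)) = coeff 0 (HS y σ c w m) := by
              conv_lhs => rw [HS]
              rw [hc, phi, if_pos rfl, geo]
              simp [coeff_zero_eq_constantCoeff_apply]
            rw [this]
            exact Sm w hav c 0 (by omega)
          · rw [hrec, add_mul, Sm w hav c (k+1) (by omega), mul_assoc, ihi k (by omega)]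
            simp
      exact main (k + dW w c m - (p c + dW w (c+σ) m)) k (by omega)
    · simp only [dW] at hk
      rw [if_neg hc] at hk
      by_cases hc2 : w m = c + σ
      · rw [if_pos hc2] at hk
        rw [HS, phi, if_neg hc, if_pos hc2, lin, mul_sub, mul_one, map_sub, ← mul_assoc]
        rcases k with _ | k
        · have : coeff 0 (HS y σ c w m * C (y m) * X) = 0 := by simp
          rw [this, sub_zero]
          exact Sm w hav c 0 (by omega)
        · rw [coeff_succ_mul_X, coeff_mul_C', sub_mul, Sm w hav c (k+1) (by omega), mul_assoc,
            (D.yE m w).eq, ← mul_assoc, Sm w hav c k (by omega)]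
          simp
      · rw [if_neg hc2] at hk
        rw [HS, phi, if_neg hc, if_neg hc2, mul_one]
        exact Sm w hav c k (by omega)

theorem KD.final (D : KD e n y ψ E lam) (hne : n < e) {t : ZMod e}
    {p p' : ZMod e → ℕ} (hp0 : ∀ x, x ≠ t → lam x ≤ p x)
    (hp : ∀ x, x ≠ t → x - 1 ≠ t → p (x - 1) + lam x ≤ p x)
    (hp0' : ∀ x, x ≠ t → lam x ≤ p' x)
    (hp' : ∀ x, x ≠ t → x + 1 ≠ t → p' (x + 1) + lam x ≤ p' x)
    (ℓ : ℕ) (hl : ∀ x, x ≠ t → p x + p' (x+1) ≤ ℓ)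
    (m : ℕ) (hm : m < n) (w : ℕ → ZMod e) (hav : ∀ j < n, w j ≠ t) : y m ^ ℓ * E w = 0 := by
  have S1 := D.main hne (σ := 1) (Or.inl rfl) hp0 hp (m+1) (by omega)
  have S2 := D.main hne (σ := -1) (Or.inr rfl) hp0' (by simpa using hp') m hm.le
  set a := w m with ha
  have prod : ∀ j, j ≤ m → HS y (-1) (a+1) w j * HS y 1 a w j = 1 := by
    intro j
    induction j with
    | zero => intro _; simp [HS]
    | succ j ih =>
      intro hj
      have hone : (1 : ZMod e) ≠ 0 := by
        have := sig_ne (σ := (1 : ZMod e)) (Or.inl rfl) 1 (by omega) (by omega)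
        simpa using this
      have h1 : a ≠ a + 1 := by simpa using hone
      have cc : Commute (phi (-1) (a+1) (w j) (y j)) (HS y 1 a w j) :=
        comm_HS _ _ _ _ (fun i _ => (comm_phi (comm_CC (D.yy i j)) _ _ _).symm)
      simp only [HS]
      rw [mul_assoc, ← mul_assoc (phi _ _ _ _), cc.eq, mul_assoc, ← mul_assoc (HS _ _ _ _ _),
        ih (by omega), one_mul]
      unfold phi
      by_cases e1 : w j = a
      · rw [e1, if_neg h1, if_pos (by ring), if_pos rfl, lin_geo]
      by_cases e2 : w j = a + 1
      · rw [if_pos e2, if_neg e1, if_pos e2, geo_lin]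
      · rw [if_neg e2, if_neg (by simpa using e1), if_neg e1, if_neg e2, mul_one]
  have hgeo : HS y (-1) (a+1) w m * HS y 1 a w (m+1) = geo (y m) := by
    conv_lhs => rw [HS.eq_2 y 1 a w m]
    rw [← mul_assoc, prod m le_rfl, one_mul, phi, if_pos rfl]
  have : y m ^ ℓ = coeff ℓ (HS y (-1) (a+1) w m * HS y 1 a w (m+1)) := by
    rw [hgeo, geo, coeff_mk]
  rw [this, coeff_mul, Finset.sum_mul]
  apply Finset.sum_eq_zero
  rintro ⟨i, j⟩ hij
  rw [Finset.HasAntidiagonal.mem_antidiagonal] at hij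
  simp only at hij ⊢
  by_cases h1 : p a + dW w (a+1) (m+1) < j + dW w a (m+1)
  · rw [mul_assoc, S1 w hav a j h1, mul_zero]
  · by_cases h2 : p' (a+1) + dW w (a+1+(-1)) m < i + dW w (a+1) m
    · rw [mul_assoc, ← (D.cE _ _ _ _ _ _).eq, ← mul_assoc, S2 w hav (a+1) i h2, zero_mul]
    · exfalso
      have h3 := hl a (hav m hm)
      rw [add_neg_cancel_right] at h2
      have hone : (1 : ZMod e) ≠ 0 := by
        have := sig_ne (σ := (1 : ZMod e)) (Or.inl rfl) 1 (by omega) (by omega)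
        simpa using this
      simp only [dW] at h1
      rw [← ha, if_pos rfl, if_neg (by simpa using hone)] at h1
      omega

end chain2

section inst
variable (K : Type) [Field K] (n e ℓ : ℕ) [NeZero e] (κ : ℕ → ℤ)

/-- idempotent attached to a word -/
noncomputable def wE (w : ℕ → ZMod e) : KLR K n e ℓ κ := KeGen K n e ℓ κ (fun k => w k.1)
/-- total version of y -/
noncomputable def wY (k : ℕ) : KLR K n e ℓ κ := if h : k < n then KyGen K n e ℓ κ ⟨k, h⟩ else 0
/-- total version of ψ -/
noncomputable def wP (r : ℕ) : KLR K n e ℓ κ :=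
  if h : r < n - 1 then KpsiGen K n e ℓ κ ⟨r, h⟩ else 0
/-- multiplicities of the weight -/
noncomputable def wL (x : ZMod e) : ℕ :=
  ((Finset.range ℓ).filter fun l => ((κ l : ZMod e) = x)).card

theorem swap_word (w : ℕ → ZMod e) (r : Fin (n-1)) :
    swapSeq (fun k : Fin n => w k.1) r = fun k : Fin n => swW r.1 w k.1 := by
  funext k
  unfold swapSeq
  by_cases h1 : k = pL r
  · subst h1; rw [if_pos rfl]; exact (swW_l r.1 w).symm
  by_cases h2 : k = pR r
  · subst h2; rw [if_neg h1, if_pos rfl]; exact (swW_r r.1 w).symm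
  rw [if_neg h1, if_neg h2, swW_o r.1 k.1 w]
  · intro h; exact h1 (Fin.ext h)
  · intro h; exact h2 (Fin.ext h)

theorem negaux {A : Type*} [Ring A] (a b c d : A) (h : d = (a - b) * c) : (b - a) * c = -d := by
  rw [h, ← neg_mul, neg_sub]

theorem wKD (hne : n < e) : KD e n (wY K n e ℓ κ) (wP K n e ℓ κ) (wE K n e ℓ κ) (wL e ℓ κ) := by
  have mk := fun {a b} (h : KLRRel K n e ℓ κ a b) => RingQuot.mkAlgHom_rel K h
  have two : 2 ≤ n → ∀ a b : ZMod e, a = b + 1 → b ≠ a + 1 := by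
    intro hn a b h1 h2
    have := sig_ne (σ := (1 : ZMod e)) (Or.inl rfl) 2 (by omega) (by omega)
    apply this
    push_cast
    linear_combination -h1 - h2
  have Yd : ∀ {k} (h : k < n), wY K n e ℓ κ k = RingQuot.mkAlgHom K (KLRRel K n e ℓ κ) (kY K ⟨k, h⟩) := by
    intro k h; rw [wY, dif_pos h]; rfl
  have Pd : ∀ {k} (h : k < n - 1), wP K n e ℓ κ k
      = RingQuot.mkAlgHom K (KLRRel K n e ℓ κ) (kPsi K ⟨k, h⟩) := by
    intro k h; rw [wP, dif_pos h]; rfl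
  have Ed : ∀ w, wE K n e ℓ κ w
      = RingQuot.mkAlgHom K (KLRRel K n e ℓ κ) (kE K (fun k : Fin n => w k.1)) := fun w => rfl
  refine ⟨?_, ?_, ?_, ?_, ?_, ?_, ?_, ?_, ?_, ?_, ?_, ?_, ?_⟩
  · intro k m
    by_cases hk : k < n
    · by_cases hm : m < n
      · rw [Yd hk, Yd hm]
        have := mk (KLRRel.yy ⟨k, hk⟩ ⟨m, hm⟩)
        simp only [map_mul] at this
        exact this
      · rw [wY, wY, dif_neg hm]; exact Commute.zero_right _
    · rw [wY, dif_neg hk]; exact Commute.zero_left _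
  · intro k w
    by_cases hk : k < n
    · rw [Yd hk, Ed]
      have := mk (KLRRel.yE ⟨k, hk⟩ (fun k : Fin n => w k.1))
      simp only [map_mul] at this
      exact this
    · rw [wY, dif_neg hk]; exact Commute.zero_left _
  · intro r w hr
    have hr' : r < n - 1 := by omega
    have := mk (KLRRel.psiE ⟨r, hr'⟩ (fun k : Fin n => w k.1))
    rw [swap_word] at this
    rw [Pd hr', Ed, Ed]
    simp only [map_mul] at this
    exact this
  · intro r k hr h1 h2
    have hr' : r < n - 1 := by omega
    by_cases hk : k < n
    · rw [Yd hk, Pd hr']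
      have := mk (KLRRel.psiyFar ⟨r, hr'⟩ ⟨k, hk⟩ ⟨h1, h2⟩)
      simp only [map_mul] at this
      exact this
    · rw [wY, dif_neg hk]; exact Commute.zero_right _
  · intro r w hr hw
    have hr' : r < n - 1 := by omega
    have := mk (KLRRel.psiyNe ⟨r, hr'⟩ (fun k : Fin n => w k.1) hw)
    rw [Pd hr', Yd hr, Yd (by omega : r < n), Ed]
    simp only [map_mul] at this
    exact this
  · intro r w hr hw
    have hr' : r < n - 1 := by omega
    have := mk (KLRRel.ypsiNe ⟨r, hr'⟩ (fun k : Fin n => w k.1) hw)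
    rw [Pd hr', Yd hr, Yd (by omega : r < n), Ed]
    simp only [map_mul] at this
    exact this.symm
  · intro r w hr hw
    have hr' : r < n - 1 := by omega
    have := mk (KLRRel.psiyEq ⟨r, hr'⟩ (fun k : Fin n => w k.1) hw)
    rw [Pd hr', Yd hr, Yd (by omega : r < n), Ed]
    simp only [map_mul, map_add, map_one, add_mul, one_mul] at this
    exact this
  · intro r w hr hw
    have hr' : r < n - 1 := by omega
    have := mk (KLRRel.ypsiEq ⟨r, hr'⟩ (fun k : Fin n => w k.1) hw)
    rw [Pd hr', Yd hr, Yd (by omega : r < n), Ed]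
    simp only [map_mul, map_add, map_one, add_mul, one_mul] at this
    exact this
  · intro r w hr hw
    have hr' : r < n - 1 := by omega
    have := mk (KLRRel.quadEq ⟨r, hr'⟩ (fun k : Fin n => w k.1) hw)
    rw [Pd hr', Ed]
    simpa only [map_mul, map_zero, pow_two] using this
  · intro r w hr hw h2 h3
    have hr' : r < n - 1 := by omega
    have := mk (KLRRel.quadNone ⟨r, hr'⟩ (fun k : Fin n => w k.1) hw h2 h3)
    rw [Pd hr', Ed]
    simpa only [map_mul, map_zero, pow_two] using this
  · intro r w hr hw
    have hr' : r < n - 1 := by omega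
    rw [Pd hr', Yd hr, Yd (by omega : r < n), Ed]
    rcases hw with hw | hw
    · right
      have := mk (KLRRel.quadR ⟨r, hr'⟩ (fun k : Fin n => w k.1) hw (two (by omega) _ _ hw))
      simp only [map_mul, map_sub, pow_two] at this
      exact negaux _ _ _ _ this
    · left
      have := mk (KLRRel.quadL ⟨r, hr'⟩ (fun k : Fin n => w k.1) hw (two (by omega) _ _ hw))
      simp only [map_mul, map_sub, pow_two] at this
      rw [this]; rfl
  · intro r w hr h0 hw
    have hr' : r < n - 1 := by omega
    have hr2 : r + 1 < n - 1 := by omega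
    rw [Pd hr', Pd hr2, Ed]
    rcases hw with hw | hw
    · right
      have := mk (KLRRel.braidR ⟨r, hr'⟩ hr2 (fun k : Fin n => w k.1) h0 hw (two (by omega) _ _ hw))
      simp only [map_mul, map_sub, map_one] at this
      rw [sub_mul, this, sub_mul]; simp
    · left
      have := mk (KLRRel.braidL ⟨r, hr'⟩ hr2 (fun k : Fin n => w k.1) h0 hw (two (by omega) _ _ hw))
      simp only [map_mul, map_add, map_one] at this
      rw [sub_mul, this, add_mul]; simp
  · intro w hn
    have := mk (KLRRel.cyc hn (fun k : Fin n => w k.1))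
    rw [Yd hn, Ed]
    simp only [map_mul, map_pow, map_zero] at this
    exact this

theorem val_pred {e : ℕ} [NeZero e] (a : ZMod e) (h : a ≠ 0) : (a - 1).val + 1 = a.val := by
  have h0 : 0 < a.val := Nat.pos_of_ne_zero (by rwa [Ne, ZMod.val_eq_zero])
  have hlt := ZMod.val_lt a
  have h1 : (1 : ZMod e).val = 1 := by
    rw [ZMod.val_one_eq_one_mod]; exact Nat.mod_eq_of_lt (by omega)
  rw [ZMod.val_sub (by omega), h1]; omega

/-- partial level, ascending -/
noncomputable def pUp (t x : ZMod e) : ℕ :=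
  ((Finset.range ℓ).filter fun l => ((κ l : ZMod e) ≠ t ∧ ((κ l : ZMod e) - t).val ≤ (x - t).val)).card
/-- partial level, descending -/
noncomputable def pDn (t x : ZMod e) : ℕ :=
  ((Finset.range ℓ).filter fun l => ((κ l : ZMod e) ≠ t ∧ (t - (κ l : ZMod e)).val ≤ (t - x).val)).card

theorem word_nil (hne : n < e) (r : Fin n) (i : Fin n → ZMod e) :
    KyGen K n e ℓ κ r ^ ℓ * KeGen K n e ℓ κ i = 0 := by
  obtain ⟨t, ht⟩ : ∃ t, ∀ j, i j ≠ t := by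
    by_contra hcon
    push Not at hcon
    have := Fintype.card_le_of_surjective i (fun t => hcon t)
    rw [ZMod.card, Fintype.card_fin] at this
    omega
  set w : ℕ → ZMod e := fun k => if h : k < n then i ⟨k, h⟩ else 0 with hw
  have hwi : (fun k : Fin n => w k.1) = i := by
    funext k; simp [hw]
  have hav : ∀ j < n, w j ≠ t := by
    intro j hj; simp only [hw, dif_pos hj]; exact ht _
  have key := (wKD K n e ℓ κ hne).final hne (t := t) (p := pUp e ℓ κ t) (p' := pDn e ℓ κ t)
    ?_ ?_ ?_ ?_ ℓ ?_ r.1 r.2 w hav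
  · rw [wE, hwi, wY, dif_pos r.2] at key
    exact key
  · intro x hx
    apply Finset.card_le_card
    intro l
    simp only [Finset.mem_filter]
    rintro ⟨h1, rfl⟩
    exact ⟨h1, hx, le_rfl⟩
  · intro x hx hx1
    have hv := val_pred (x - t) (sub_ne_zero.2 hx)
    rw [show x - t - 1 = x - 1 - t by ring] at hv
    unfold pUp wL
    rw [← Finset.card_union_of_disjoint]
    · apply Finset.card_le_card
      intro l
      simp only [Finset.mem_filter, Finset.mem_union]
      rintro (⟨h1, h2, h3⟩ | ⟨h1, rfl⟩)
      · exact ⟨h1, h2, by omega⟩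
      · exact ⟨h1, hx, le_rfl⟩
    · rw [Finset.disjoint_left]
      intro l
      simp only [Finset.mem_filter]
      rintro ⟨h1, h2, h3⟩ ⟨_, rfl⟩
      omega
  · intro x hx
    apply Finset.card_le_card
    intro l
    simp only [Finset.mem_filter]
    rintro ⟨h1, rfl⟩
    exact ⟨h1, hx, le_rfl⟩
  · intro x hx hx1
    have hv := val_pred (t - x) (sub_ne_zero.2 hx.symm)
    rw [show t - x - 1 = t - (x + 1) by ring] at hv
    unfold pDn wL
    rw [← Finset.card_union_of_disjoint]
    · apply Finset.card_le_card
      intro l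
      simp only [Finset.mem_filter, Finset.mem_union]
      rintro (⟨h1, h2, h3⟩ | ⟨h1, rfl⟩)
      · exact ⟨h1, h2, by omega⟩
      · exact ⟨h1, hx, le_rfl⟩
    · rw [Finset.disjoint_left]
      intro l
      simp only [Finset.mem_filter]
      rintro ⟨h1, h2, h3⟩ ⟨_, rfl⟩
      omega
  · intro x hx
    have hv := val_pred (t - x) (sub_ne_zero.2 hx.symm)
    rw [show t - x - 1 = t - (x + 1) by ring] at hv
    have hneg : ∀ z : ZMod e, z ≠ t → (t - z).val + (z - t).val = e := by
      intro z hz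
      haveI : NeZero (z - t) := ⟨sub_ne_zero.2 hz⟩
      have := ZMod.val_neg_of_ne_zero (z - t)
      rw [neg_sub] at this
      have := ZMod.val_lt (z - t)
      omega
    have hx' := hneg x hx
    unfold pUp pDn
    rw [← Finset.card_union_of_disjoint]
    · refine (Finset.card_le_card (t := Finset.range ℓ) ?_).trans (by simp)
      intro l
      simp only [Finset.mem_filter, Finset.mem_union]
      rintro (⟨h1, _⟩ | ⟨h1, _⟩) <;> exact h1
    · rw [Finset.disjoint_left]
      intro l
      simp only [Finset.mem_filter]
      rintro ⟨h1, h2, h3⟩ ⟨_, _, h4⟩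
      have := hneg _ h2
      omega

end inst

/-- Hoffnung–Lauda nilpotency, `e > n` case: in the cyclotomic
quiver Hecke algebra `R_n^Λ(K)` with `e > n`, one has `y_r^ℓ = 0` where `ℓ` is
the level. -/
theorem y_ell_nilpotent (n ℓ e : ℕ) (hℓ : 1 ≤ ℓ) (hen : n < e) [NeZero e]
    (κ : ℕ → ℤ) (hκ : ∀ l, l + 1 < ℓ → (n : ℤ) ≤ κ l - κ (l + 1))
    (K : Type) [Field K] (ξ : Kˣ)
    (hξ1 : qint (ξ : K) (e : ℤ) = 0)
    (hξ2 : ∀ k : ℕ, 1 ≤ k → k < e → qint (ξ : K) (k : ℤ) ≠ 0)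
    (r : Fin n) :
    KyGen K n e ℓ κ r ^ ℓ = 0 := by
  have hc := RingQuot.mkAlgHom_rel K (KLRRel.complete (R := K) (n := n) (e := e) (ℓ := ℓ) (κ := κ))
  rw [map_sum, map_one] at hc
  rw [← mul_one (KyGen K n e ℓ κ r ^ ℓ), ← hc, Finset.mul_sum]
  exact Finset.sum_eq_zero (fun i _ => word_nil K n e ℓ κ hen r i)

end Paper
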